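/- arXiv:2403.02842 — 3 statements merged into one kernel-verified Lean document; each statement's English description precedes it below -/
import Mathlib

section
/- Let p ∈ [0, 1/2) be a fixed constant. Then asymptotically almost surely, every orientation of the binomial random graph G(n,p) contains a Seymour vertex. -/
open Filter

/-- The outneighbourhood `N1(v)` of `v` in the digraph with arc relation `D`. -/
def outNbr {V : Type*} (D : V → V → Prop) (v : V) : Set V := {w | w ≠ v ∧ D v w}

/-- The inneighbourhood `N⁻(v)` of `v`. -/
def inNbr {V : Type*} (D : V → V → Prop) (v : V) : Set V := {w | w ≠ v ∧ D w v}

/-- The second outneighbourhood `N2(v)` of `v`. -/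
def outNbr2 {V : Type*} (D : V → V → Prop) (v : V) : Set V :=
  {w | w ∉ insert v (outNbr D v) ∧ ∃ u ∈ outNbr D v, D u w}

/-- `v` is a Seymour vertex: `|N2(v)| ≥ |N1(v)|`. -/
def SeymourVertex {V : Type*} (D : V → V → Prop) (v : V) : Prop :=
  (outNbr D v).ncard ≤ (outNbr2 D v).ncard

/-- `v` is a Sullivan vertex: `|N2(v)| ≥ |N⁻(v)|`. -/
def SullivanVertex {V : Type*} (D : V → V → Prop) (v : V) : Prop :=
  (inNbr D v).ncard ≤ (outNbr2 D v).ncard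

/-- An oriented graph: an asymmetric (hence irreflexive and loopless) arc relation. -/
def OrientedGraph {V : Type*} (D : V → V → Prop) : Prop := ∀ u v, D u v → ¬ D v u

/-- `D` is an orientation of the simple graph `G`. -/
def Orients {V : Type*} (D : V → V → Prop) (G : SimpleGraph V) : Prop :=
  OrientedGraph D ∧ ∀ u v, G.Adj u v ↔ (D u v ∨ D v u)

/-- Strong connectivity of a digraph: every vertex reaches every other by a directed path. -/
def StrongConn {V : Type*} (D : V → V → Prop) : Prop := ∀ u v, Relation.ReflTransGen D u v

/-- The number of edges of `G` with one endpoint in `A` and the other in `B`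
(counted via ordered pairs; equals `e(A,B)` for disjoint `A`, `B`). -/
noncomputable def eBtw {V : Type*} (G : SimpleGraph V) (A B : Set V) : ℕ :=
  {p : V × V | p.1 ∈ A ∧ p.2 ∈ B ∧ G.Adj p.1 p.2}.ncard

/-- The number of edges of `G` with both endpoints in `A`. -/
noncomputable def eIn {V : Type*} (G : SimpleGraph V) (A : Set V) : ℕ :=
  {e | e ∈ G.edgeSet ∧ ∀ v ∈ e, v ∈ A}.ncard

open scoped Classical in
/-- The probability that the binomial random graph `G(n,p)` satisfies the property `P`. -/
noncomputable def gnpProb (n : ℕ) (p : ℝ) (P : SimpleGraph (Fin n) → Prop) : ℝ :=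
  ∑ G : SimpleGraph (Fin n),
    if P G then p ^ G.edgeSet.ncard * (1 - p) ^ (n.choose 2 - G.edgeSet.ncard) else 0

/-- `w` is reachable from `v` in at most two steps. -/
def reach2 {V : Type*} (D : V → V → Prop) (v w : V) : Prop :=
  w = v ∨ D v w ∨ ∃ u, D v u ∧ D u w

def badPair {V : Type*} (D : V → V → Prop) (v w : V) : Prop :=
  ¬ reach2 D v w ∧ ¬ reach2 D w v

section det
open Finset
open scoped Classical

theorem card_pairs {V : Type*} [Fintype V] (R : V → V → Prop) :
    #{q : V × V | R q.1 q.2} = ∑ v, #{w | R v w} := by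
  rw [Finset.card_filter, Fintype.sum_prod_type]
  simp only [Finset.card_filter]

theorem reach2_card {V : Type*} [Fintype V] (D : V → V → Prop) (hO : OrientedGraph D)
    (v : V) (hS : ¬ SeymourVertex D v) :
    #{w | reach2 D v w} ≤ 2 * #{w | D v w} := by
  have hirr : ∀ u, ¬ D u u := fun u h => hO u u h h
  have h1 : (outNbr D v).ncard = #{w | D v w} := by
    rw [← Set.ncard_coe_finset]
    congr 1
    ext w
    simp only [outNbr, Set.mem_ofPred_eq, coe_filter, mem_univ, true_and]
    constructor
    · exact fun h => h.2
    · intro h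
      refine ⟨?_, h⟩
      rintro rfl
      exact hirr _ h
  have h2 : (#{w | reach2 D v w}) = (insert v (outNbr D v) ∪ outNbr2 D v : Set V).ncard := by
    rw [← Set.ncard_coe_finset]
    congr 1
    ext w
    simp only [outNbr, outNbr2, Set.mem_ofPred_eq, coe_filter, mem_univ, true_and,
      Set.mem_union, Set.mem_insert_iff]
    unfold reach2
    constructor
    · rintro (h | h | ⟨u, h, h'⟩)
      · tauto
      · left; right
        refine ⟨?_, h⟩
        rintro rfl
        exact hirr _ h
      · by_cases hw : w = v ∨ w ≠ v ∧ D v w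
        · left; exact hw
        · right
          refine ⟨hw, u, ⟨?_, h⟩, h'⟩
          rintro rfl
          exact hirr _ h
    · rintro ((h | h) | ⟨_, u, h, h'⟩)
      · tauto
      · tauto
      · exact Or.inr (Or.inr ⟨u, h.2, h'⟩)
  have h3 := Set.ncard_union_le (insert v (outNbr D v)) (outNbr2 D v)
  have h4 := Set.ncard_insert_le v (outNbr D v)
  unfold SeymourVertex at hS
  omega

theorem card_adj {V : Type*} [Fintype V] (G : SimpleGraph V) (D : V → V → Prop)
    (hD : Orients D G) (X : Finset V) :
    #{q ∈ X ×ˢ X | G.Adj q.1 q.2} = 2 * #{q ∈ X ×ˢ X | D q.1 q.2} := by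
  have e : ({q ∈ X ×ˢ X | G.Adj q.1 q.2} : Finset (V × V)) =
      {q ∈ X ×ˢ X | D q.1 q.2} ∪ {q ∈ X ×ˢ X | D q.2 q.1} := by
    ext q
    simp only [mem_filter, mem_union, hD.2]
    tauto
  rw [e, card_union_of_disjoint]
  · have : #{q ∈ X ×ˢ X | D q.2 q.1} = #{q ∈ X ×ˢ X | D q.1 q.2} := by
      apply Finset.card_bij' (fun q _ => q.swap) (fun q _ => q.swap) <;> simp <;> tauto
    omega
  · rw [Finset.disjoint_filter]
    intro q _ h
    exact hD.1 _ _ h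

theorem pairs_bound {V : Type*} [Fintype V] (G : SimpleGraph V) (D : V → V → Prop)
    (hD : Orients D G) (hS : ∀ v, ¬ SeymourVertex D v) :
    (Fintype.card V) ^ 2 ≤ #{q : V × V | badPair D q.1 q.2} + 2 * #{q : V × V | G.Adj q.1 q.2} := by
  have hM : #{q : V × V | reach2 D q.1 q.2} ≤ 2 * #{q : V × V | D q.1 q.2} := by
    rw [card_pairs, card_pairs, Finset.mul_sum]
    exact Finset.sum_le_sum fun v _ => reach2_card D hD.1 v (hS v)
  have hadj := card_adj G D hD univ
  rw [← univ_product_univ.symm] at hadj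
  have hsw : #{q : V × V | reach2 D q.2 q.1} = #{q : V × V | reach2 D q.1 q.2} := by
    apply Finset.card_bij' (fun q _ => q.swap) (fun q _ => q.swap) <;> simp
  set S1 : Finset (V × V) := {q : V × V | badPair D q.1 q.2} with hS1
  set S2 : Finset (V × V) := {q : V × V | reach2 D q.1 q.2} with hS2
  set S3 : Finset (V × V) := {q : V × V | reach2 D q.2 q.1} with hS3
  have hcov : (univ : Finset (V × V)) ⊆ S1 ∪ (S2 ∪ S3) := by
    intro q _
    simp only [hS1, hS2, hS3, mem_union, mem_filter, mem_univ, true_and]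
    unfold badPair
    by_cases h1 : reach2 D q.1 q.2
    · exact Or.inr (Or.inl h1)
    · by_cases h2 : reach2 D q.2 q.1
      · exact Or.inr (Or.inr h2)
      · exact Or.inl ⟨h1, h2⟩
  have h1 := Finset.card_le_card hcov
  have h2 := Finset.card_union_le S1 (S2 ∪ S3)
  have h3 := Finset.card_union_le S2 S3
  have h4 : #(univ : Finset (V × V)) = (Fintype.card V) ^ 2 := by
    rw [card_univ, Fintype.card_prod, sq]
  omega

/-- upper bound for T, fixed x y -/
theorem T_upper {V : Type*} [Fintype V] (G : SimpleGraph V) (D : V → V → Prop)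
    (hD : Orients D G) (ε : ℝ) (hε : 0 ≤ ε)
    (hC : ∀ X Y : Finset V, ε * Fintype.card V ≤ #X → ε * Fintype.card V ≤ #Y →
      ∃ x ∈ X, ∃ y ∈ Y, G.Adj x y) (x y : V) :
    (#{q : V × V | badPair D q.1 x ∧ badPair D q.1 y ∧ D y q.2 ∧ D q.2 x} : ℝ)
      ≤ ε * (Fintype.card V) ^ 2 := by
  set W : Finset V := {v | badPair D v x ∧ badPair D v y} with hW
  set U : Finset V := {u | ∀ v ∈ W, ¬ G.Adj v u} with hU
  have hsub : ({q : V × V | badPair D q.1 x ∧ badPair D q.1 y ∧ D y q.2 ∧ D q.2 x} :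
      Finset (V × V)) ⊆ W ×ˢ U := by
    rintro ⟨v, u⟩ h
    simp only [mem_filter, mem_univ, true_and] at h
    obtain ⟨h1, h2, h3, h4⟩ := h
    simp only [mem_product, hW, hU, mem_filter, mem_univ, true_and]
    refine ⟨⟨h1, h2⟩, ?_⟩
    rintro v' ⟨h1', h2'⟩ hadj
    rcases (hD.2 _ _).1 hadj with h | h
    · exact h1'.1 (Or.inr (Or.inr ⟨u, h, h4⟩))
    · exact h2'.2 (Or.inr (Or.inr ⟨u, h3, h⟩))
  have h1 : (#{q : V × V | badPair D q.1 x ∧ badPair D q.1 y ∧ D y q.2 ∧ D q.2 x} : ℝ) ≤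
      #W * #U := by
    have := Finset.card_le_card hsub
    rw [card_product] at this
    exact_mod_cast this
  have hWn : (#W : ℝ) ≤ Fintype.card V := by exact_mod_cast Finset.card_le_univ W
  have hUn : (#U : ℝ) ≤ Fintype.card V := by exact_mod_cast Finset.card_le_univ U
  refine h1.trans ?_
  by_cases hc : ε * Fintype.card V ≤ #W
  · have : (#U : ℝ) ≤ ε * Fintype.card V := by
      by_contra hh
      push Not at hh
      obtain ⟨a, ha, b, hb, hab⟩ := hC W U hc hh.le
      exact (mem_filter.1 hb).2 a ha hab
    calc (#W : ℝ) * #U ≤ Fintype.card V * (ε * Fintype.card V) := by gcongr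
      _ = _ := by ring
  · push Not at hc
    calc (#W : ℝ) * #U ≤ (ε * Fintype.card V) * Fintype.card V := by gcongr
      _ = _ := by ring

theorem arcs_le {V : Type*} [Fintype V] (R : V → V → Prop) (X : Finset V) (k : ℝ)
    (h : ∀ u ∈ X, (#{x ∈ X | R u x} : ℝ) ≤ k) :
    (#{q ∈ X ×ˢ X | R q.1 q.2} : ℝ) ≤ #X * k := by
  rw [Finset.card_filter, Finset.sum_product]
  push_cast
  simp only [Finset.card_filter] at h
  push_cast at h
  rw [← nsmul_eq_mul]
  exact Finset.sum_le_card_nsmul _ _ _ h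

theorem low_small {V : Type*} [Fintype V] (R : V → V → Prop) (α c : ℝ) (hn : 0 < Fintype.card V)
    (hc : 0 < c)
    (hB : ∀ X : Finset V, α * Fintype.card V ≤ #X →
      c * (Fintype.card V) ^ 2 ≤ 2 * #{q ∈ X ×ˢ X | R q.1 q.2}) (Q : Finset V) :
    (#{u ∈ Q | (#{x ∈ Q | R u x} : ℝ) < c / 4 * Fintype.card V} : ℝ) < α * Fintype.card V := by
  by_contra hh
  push Not at hh
  set X : Finset V := {u ∈ Q | (#{x ∈ Q | R u x} : ℝ) < c / 4 * Fintype.card V} with hX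
  have h1 := hB X hh
  have h2 := arcs_le R X (c / 4 * Fintype.card V) (by
    intro u hu
    have h := (mem_filter.1 hu).2
    refine le_trans ?_ h.le
    exact_mod_cast Finset.card_le_card (Finset.filter_subset_filter _ (Finset.filter_subset _ _)))
  have hXn : (#X : ℝ) ≤ Fintype.card V := by exact_mod_cast Finset.card_le_univ X
  have hn' : (0 : ℝ) < Fintype.card V := by exact_mod_cast hn
  have h3 : (#X : ℝ) * (c / 4 * Fintype.card V) ≤ Fintype.card V * (c / 4 * Fintype.card V) := by
    gcongr
  have : 0 < c * (Fintype.card V : ℝ) ^ 2 := by positivity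
  nlinarith

theorem T_lower {V : Type*} [Fintype V] (G : SimpleGraph V) (D : V → V → Prop)
    (hD : Orients D G) (γ c : ℝ) (hn : 0 < Fintype.card V) (hγ : 0 < γ) (hc : 0 < c)
    (hB : ∀ X : Finset V, γ / 8 * Fintype.card V ≤ #X →
      c * (Fintype.card V) ^ 2 ≤ #{q ∈ X ×ˢ X | G.Adj q.1 q.2}) (Q : Finset V)
    (hQ : γ / 2 * Fintype.card V ≤ #Q) :
    γ / 4 * (c / 4) ^ 2 * (Fintype.card V) ^ 3 ≤
      ∑ u ∈ Q, (#{y ∈ Q | D y u} : ℝ) * #{x ∈ Q | D u x} := by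
  have hn' : (0 : ℝ) < Fintype.card V := by exact_mod_cast hn
  have e1 := low_small (fun u x => D u x) (γ / 8) c hn hc (by
    intro X hX
    have := hB X hX
    rw [card_adj G D hD X] at this
    exact_mod_cast this) Q
  have e2 := low_small (fun u x => D x u) (γ / 8) c hn hc (by
    intro X hX
    have := hB X hX
    rw [card_adj G D hD X] at this
    have h2 : #{q ∈ X ×ˢ X | D q.2 q.1} = #{q ∈ X ×ˢ X | D q.1 q.2} := by
      apply Finset.card_bij' (fun q _ => q.swap) (fun q _ => q.swap) <;> simp <;> tauto
    rw [h2]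
    exact_mod_cast this) Q
  set k : ℝ := c / 4 * Fintype.card V with hk
  set P : Finset V := {u ∈ Q | k ≤ (#{y ∈ Q | D y u} : ℝ) ∧ k ≤ (#{x ∈ Q | D u x} : ℝ)} with hP
  have hcov : Q ⊆ P ∪ ({u ∈ Q | (#{x ∈ Q | D u x} : ℝ) < k} ∪
      {u ∈ Q | (#{x ∈ Q | D x u} : ℝ) < k}) := by
    intro u hu
    simp only [hP, mem_union, mem_filter, hu, true_and]
    by_cases h1 : k ≤ (#{y ∈ Q | D y u} : ℝ)
    · by_cases h2 : k ≤ (#{y ∈ Q | D u y} : ℝ)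
      · left; exact ⟨h1, h2⟩
      · push Not at h2; tauto
    · push Not at h1; tauto
  have h1 := (Finset.card_le_card hcov).trans (Finset.card_union_le _ _)
  have h2 := Finset.card_union_le ({u ∈ Q | (#{x ∈ Q | D u x} : ℝ) < k} : Finset V)
      {u ∈ Q | (#{x ∈ Q | D x u} : ℝ) < k}
  have h3 : (#Q : ℝ) ≤ #P + (#{u ∈ Q | (#{x ∈ Q | D u x} : ℝ) < k} +
      #{u ∈ Q | (#{x ∈ Q | D x u} : ℝ) < k}) := by
    exact_mod_cast h1.trans (Nat.add_le_add_left h2 _)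
  have h4 : γ / 4 * Fintype.card V ≤ #P := by linarith
  have hk0 : 0 < k := by positivity
  calc γ / 4 * (c / 4) ^ 2 * (Fintype.card V : ℝ) ^ 3 = (γ / 4 * Fintype.card V) * (k * k) := by
        rw [hk]; ring
    _ ≤ #P * (k * k) := by gcongr
    _ = ∑ u ∈ P, k * k := by rw [sum_const, nsmul_eq_mul]
    _ ≤ ∑ u ∈ P, (#{y ∈ Q | D y u} : ℝ) * #{x ∈ Q | D u x} := by
        apply Finset.sum_le_sum
        intro u hu
        have := (mem_filter.1 hu).2
        gcongr
        · exact this.1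
        · exact this.2
    _ ≤ _ := by
        apply Finset.sum_le_sum_of_subset_of_nonneg (Finset.filter_subset _ _)
        intros; positivity

theorem bad_few {V : Type*} [Fintype V] (G : SimpleGraph V) (D : V → V → Prop)
    (hD : Orients D G) (γ c ε : ℝ) (hn : 0 < Fintype.card V) (hγ : 0 < γ) (hc : 0 < c)
    (hε : 0 ≤ ε) (hεγ : ε < γ ^ 2 / 8 * (c / 4) ^ 2)
    (hB : ∀ X : Finset V, γ / 8 * Fintype.card V ≤ #X →
      c * (Fintype.card V) ^ 2 ≤ #{q ∈ X ×ˢ X | G.Adj q.1 q.2})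
    (hC : ∀ X Y : Finset V, ε * Fintype.card V ≤ #X → ε * Fintype.card V ≤ #Y →
      ∃ x ∈ X, ∃ y ∈ Y, G.Adj x y) :
    (#{q : V × V | badPair D q.1 q.2} : ℝ) < γ * (Fintype.card V) ^ 2 := by
  by_contra hbad
  push Not at hbad
  have hn' : (0 : ℝ) < Fintype.card V := by exact_mod_cast hn
  set Q : V → Finset V := fun v => {w | badPair D v w} with hQ
  set L : Finset V := {v | γ / 2 * Fintype.card V ≤ #(Q v)} with hL
  have hLc : γ / 2 * Fintype.card V ≤ #L := by
    rw [card_pairs] at hbad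
    push_cast at hbad
    have h1 : ∀ v, (#{w | badPair D v w} : ℝ) ≤
        γ / 2 * Fintype.card V + if v ∈ L then (Fintype.card V : ℝ) else 0 := by
      intro v
      have hv : (#{w | badPair D v w} : ℝ) ≤ Fintype.card V := by
        exact_mod_cast Finset.card_le_univ _
      by_cases h : v ∈ L
      · rw [if_pos h]
        have : 0 ≤ γ / 2 * Fintype.card V := by positivity
        linarith
      · rw [if_neg h]
        simp only [hL, mem_filter, mem_univ, true_and, not_le] at h
        linarith
    have h2 := hbad.trans (Finset.sum_le_sum fun v _ => h1 v)
    rw [sum_add_distrib, sum_const, nsmul_eq_mul, ← Finset.sum_filter, sum_const, nsmul_eq_mul,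
      card_univ] at h2
    have h3 : #{v ∈ (univ : Finset V) | v ∈ L} = #L := by simp
    rw [h3] at h2
    have h4 : Fintype.card V * (γ / 2 * Fintype.card V) ≤ Fintype.card V * (#L : ℝ) := by
      nlinarith
    exact le_of_mul_le_mul_left h4 hn'
  -- quadruple count
  have key : ∑ v, ∑ u ∈ Q v, (#{y ∈ Q v | D y u} : ℝ) * #{x ∈ Q v | D u x} ≤
      ∑ x : V, ∑ y : V, (#{q : V × V | badPair D q.1 x ∧ badPair D q.1 y ∧ D y q.2 ∧ D q.2 x} : ℝ) := by
    have hr : ∑ x : V, ∑ y : V,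
        (#{q : V × V | badPair D q.1 x ∧ badPair D q.1 y ∧ D y q.2 ∧ D q.2 x} : ℝ) =
        ∑ v, ∑ u, ∑ x : V, ∑ y : V,
          (if badPair D v x ∧ badPair D v y ∧ D y u ∧ D u x then (1 : ℝ) else 0) := by
      simp only [Finset.card_filter, Fintype.sum_prod_type]
      push_cast
      calc _ = ∑ x : V, ∑ v : V, ∑ y : V, ∑ u : V,
            (if badPair D v x ∧ badPair D v y ∧ D y u ∧ D u x then (1 : ℝ) else 0) :=
            Finset.sum_congr rfl fun x _ => Finset.sum_comm
        _ = ∑ v : V, ∑ x : V, ∑ y : V, ∑ u : V,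
            (if badPair D v x ∧ badPair D v y ∧ D y u ∧ D u x then (1 : ℝ) else 0) :=
            Finset.sum_comm
        _ = ∑ v : V, ∑ x : V, ∑ u : V, ∑ y : V,
            (if badPair D v x ∧ badPair D v y ∧ D y u ∧ D u x then (1 : ℝ) else 0) :=
            Finset.sum_congr rfl fun v _ => Finset.sum_congr rfl fun x _ => Finset.sum_comm
        _ = _ := Finset.sum_congr rfl fun v _ => Finset.sum_comm
    rw [hr]
    apply Finset.sum_le_sum
    intro v _
    refine le_trans (Finset.sum_le_sum_of_subset_of_nonneg (Finset.subset_univ _)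
      (fun _ _ _ => by positivity)) ?_
    apply Finset.sum_le_sum
    intro u _
    apply le_of_eq
    simp only [hQ, Finset.filter_filter, Finset.card_filter]
    push_cast
    rw [mul_comm, Finset.sum_mul_sum]
    refine Finset.sum_congr rfl fun x _ => Finset.sum_congr rfl fun y _ => ?_
    by_cases h1 : badPair D v x <;> by_cases h2 : badPair D v y <;> by_cases h3 : D y u <;>
      by_cases h4 : D u x <;> simp [h1, h2, h3, h4]
  have hup : ∑ x : V, ∑ y : V,
      (#{q : V × V | badPair D q.1 x ∧ badPair D q.1 y ∧ D y q.2 ∧ D q.2 x} : ℝ) ≤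
      ε * (Fintype.card V) ^ 4 := by
    calc _ ≤ ∑ x : V, ∑ y : V, ε * (Fintype.card V : ℝ) ^ 2 := by
          refine Finset.sum_le_sum fun x _ => Finset.sum_le_sum fun y _ => ?_
          exact T_upper G D hD ε hε hC x y
      _ = _ := by simp only [sum_const, nsmul_eq_mul, card_univ]; ring
  have hlow : γ / 2 * Fintype.card V * (γ / 4 * (c / 4) ^ 2 * (Fintype.card V) ^ 3) ≤
      ∑ v, ∑ u ∈ Q v, (#{y ∈ Q v | D y u} : ℝ) * #{x ∈ Q v | D u x} := by
    calc _ ≤ #L * (γ / 4 * (c / 4) ^ 2 * (Fintype.card V : ℝ) ^ 3) := by gcongr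
      _ = ∑ v ∈ L, (γ / 4 * (c / 4) ^ 2 * (Fintype.card V : ℝ) ^ 3) := by
          rw [sum_const, nsmul_eq_mul]
      _ ≤ ∑ v ∈ L, ∑ u ∈ Q v, (#{y ∈ Q v | D y u} : ℝ) * #{x ∈ Q v | D u x} := by
          refine Finset.sum_le_sum fun v hv => ?_
          exact T_lower G D hD γ c hn hγ hc hB (Q v) (mem_filter.1 hv).2
      _ ≤ _ := by
          apply Finset.sum_le_sum_of_subset_of_nonneg (Finset.subset_univ _)
          exact fun v _ _ => Finset.sum_nonneg fun u _ =>
            mul_nonneg (Nat.cast_nonneg _) (Nat.cast_nonneg _)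
  have h5 := hlow.trans (key.trans hup)
  have h6 : γ / 2 * Fintype.card V * (γ / 4 * (c / 4) ^ 2 * (Fintype.card V : ℝ) ^ 3) =
      (γ ^ 2 / 8 * (c / 4) ^ 2) * (Fintype.card V : ℝ) ^ 4 := by ring
  rw [h6] at h5
  have h7 : ε * (Fintype.card V : ℝ) ^ 4 < (γ ^ 2 / 8 * (c / 4) ^ 2) * (Fintype.card V : ℝ) ^ 4 := by
    gcongr
  linarith

theorem det_main {V : Type*} [Fintype V] (G : SimpleGraph V) (D : V → V → Prop)
    (hD : Orients D G) (r γ c ε : ℝ) (hn : 0 < Fintype.card V) (hγ : 0 < γ) (hc : 0 < c)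
    (hε : 0 ≤ ε) (hεγ : ε < γ ^ 2 / 8 * (c / 4) ^ 2) (hr : 2 * r + γ ≤ 1)
    (hA : (#{q : V × V | G.Adj q.1 q.2} : ℝ) ≤ r * (Fintype.card V) ^ 2)
    (hB : ∀ X : Finset V, γ / 8 * Fintype.card V ≤ #X →
      c * (Fintype.card V) ^ 2 ≤ #{q ∈ X ×ˢ X | G.Adj q.1 q.2})
    (hC : ∀ X Y : Finset V, ε * Fintype.card V ≤ #X → ε * Fintype.card V ≤ #Y →
      ∃ x ∈ X, ∃ y ∈ Y, G.Adj x y) : ∃ v, SeymourVertex D v := by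
  by_contra hS
  push Not at hS
  have h1 := pairs_bound G D hD hS
  have h2 := bad_few G D hD γ c ε hn hγ hc hε hεγ hB hC
  have h3 : ((Fintype.card V : ℝ)) ^ 2 ≤ #{q : V × V | badPair D q.1 q.2} +
      2 * #{q : V × V | G.Adj q.1 q.2} := by exact_mod_cast h1
  have hn' : (0 : ℝ) < (Fintype.card V : ℝ) ^ 2 := by positivity
  nlinarith

end det
section prob
open Finset
open scoped Classical

noncomputable def wt (n : ℕ) (p : ℝ) (G : SimpleGraph (Fin n)) : ℝ :=
  p ^ G.edgeSet.ncard * (1 - p) ^ (n.choose 2 - G.edgeSet.ncard)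

theorem wt_nonneg (n : ℕ) (p : ℝ) (h0 : 0 ≤ p) (h1 : p ≤ 1) (G : SimpleGraph (Fin n)) :
    0 ≤ wt n p G := by
  have : 0 ≤ 1 - p := by linarith
  unfold wt; positivity

theorem gnp_eq (n : ℕ) (p : ℝ) (P : SimpleGraph (Fin n) → Prop) :
    gnpProb n p P = ∑ G : SimpleGraph (Fin n), if P G then wt n p G else 0 := rfl

theorem mgf (n : ℕ) (p t : ℝ) (F : Finset (Sym2 (Fin n)))
    (hF : F ⊆ (⊤ : SimpleGraph (Fin n)).edgeFinset) :
    ∑ G : SimpleGraph (Fin n), wt n p G * t ^ #{e ∈ F | e ∈ G.edgeSet} =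
      (p * t + (1 - p)) ^ #F := by
  set E := (⊤ : SimpleGraph (Fin n)).edgeFinset with hE
  have hEc : #E = n.choose 2 := by
    rw [hE, SimpleGraph.card_edgeFinset_top_eq_card_choose_two, Fintype.card_fin]
  have h1 : ∏ e ∈ E, ((p * if e ∈ F then t else 1) + (1 - p)) = (p * t + (1 - p)) ^ #F := by
    rw [← Finset.prod_subset hF]
    · rw [← Finset.prod_const]
      exact Finset.prod_congr rfl fun e he => by rw [if_pos he]
    · intro e _ he
      rw [if_neg he]; ring
  rw [← h1, Finset.prod_add]
  refine Finset.sum_bij' (fun G _ => G.edgeFinset) (fun S _ => SimpleGraph.fromEdgeSet (S : Set (Sym2 (Fin n)))) ?_ ?_ ?_ ?_ ?_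
  · intro G _
    rw [mem_powerset]
    exact SimpleGraph.edgeFinset_mono le_top
  · intro S _; exact mem_univ _
  · intro G _
    simp
  · intro S hS
    rw [mem_powerset] at hS
    ext e
    simp only [SimpleGraph.mem_edgeFinset, SimpleGraph.edgeSet_fromEdgeSet, Set.mem_sdiff, mem_coe]
    constructor
    · exact fun h => h.1
    · intro h
      refine ⟨h, ?_⟩
      have := hS h
      rw [hE, SimpleGraph.mem_edgeFinset] at this
      exact SimpleGraph.not_isDiag_of_mem_edgeSet _ this
  · intro G _
    have hGE : G.edgeFinset ⊆ E := SimpleGraph.edgeFinset_mono le_top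
    have hc : G.edgeSet.ncard = #G.edgeFinset := by
      rw [← SimpleGraph.coe_edgeFinset, Set.ncard_coe_finset]
    rw [Finset.prod_mul_distrib, Finset.prod_const, Finset.prod_const, Finset.prod_ite,
      Finset.prod_const, Finset.prod_const_one, mul_one, Finset.card_sdiff_of_subset hGE, hEc]
    unfold wt
    rw [hc]
    have : ({e ∈ F | e ∈ G.edgeSet} : Finset _) = {e ∈ G.edgeFinset | e ∈ F} := by
      ext e; simp only [mem_filter, SimpleGraph.mem_edgeFinset]; tauto
    rw [this]; ring

theorem sum_wt (n : ℕ) (p : ℝ) : ∑ G : SimpleGraph (Fin n), wt n p G = 1 := by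
  have := mgf n p 1 ∅ (Finset.empty_subset _)
  simpa using this

theorem mgf_exp (n : ℕ) (p s : ℝ) (h0 : 0 ≤ p) (h1 : p ≤ 1) (F : Finset (Sym2 (Fin n)))
    (hF : F ⊆ (⊤ : SimpleGraph (Fin n)).edgeFinset) :
    ∑ G : SimpleGraph (Fin n), wt n p G * Real.exp (s * #{e ∈ F | e ∈ G.edgeSet}) ≤
      Real.exp (#F * (p * (Real.exp s - 1))) := by
  have h := mgf n p (Real.exp s) F hF
  have h2 : ∀ k : ℕ, Real.exp s ^ k = Real.exp (s * k) := by
    intro k; rw [← Real.exp_nat_mul]; ring_nf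
  simp only [h2] at h
  rw [h, Real.exp_nat_mul]
  have := Real.add_one_le_exp (p * (Real.exp s - 1))
  have : 0 ≤ p * Real.exp s := by positivity
  apply pow_le_pow_left₀ <;> linarith

theorem markov (n : ℕ) (p s a : ℝ) (h0 : 0 ≤ p) (h1 : p ≤ 1) (F : Finset (Sym2 (Fin n)))
    (hF : F ⊆ (⊤ : SimpleGraph (Fin n)).edgeFinset) (P : SimpleGraph (Fin n) → Prop)
    (hP : ∀ G, P G → a ≤ s * #{e ∈ F | e ∈ G.edgeSet}) :
    gnpProb n p P ≤ Real.exp (#F * (p * (Real.exp s - 1)) - a) := by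
  have h := mgf_exp n p s h0 h1 F hF
  rw [Real.exp_sub, le_div_iff₀ (Real.exp_pos a)]
  refine le_trans ?_ h
  rw [gnp_eq, Finset.sum_mul]
  apply Finset.sum_le_sum
  intro G _
  have hw := wt_nonneg n p h0 h1 G
  by_cases hG : P G
  · rw [if_pos hG]
    exact mul_le_mul_of_nonneg_left (Real.exp_le_exp.2 (hP G hG)) hw
  · rw [if_neg hG, zero_mul]; positivity

theorem gnp_mono (n : ℕ) (p : ℝ) (h0 : 0 ≤ p) (h1 : p ≤ 1) (P Q : SimpleGraph (Fin n) → Prop)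
    (h : ∀ G, P G → Q G) : gnpProb n p P ≤ gnpProb n p Q := by
  rw [gnp_eq, gnp_eq]
  apply Finset.sum_le_sum
  intro G _
  have hw := wt_nonneg n p h0 h1 G
  by_cases hG : P G
  · rw [if_pos hG, if_pos (h G hG)]
  · rw [if_neg hG]; split_ifs <;> simp [hw]

theorem gnp_nonneg (n : ℕ) (p : ℝ) (h0 : 0 ≤ p) (h1 : p ≤ 1) (P : SimpleGraph (Fin n) → Prop) :
    0 ≤ gnpProb n p P := by
  rw [gnp_eq]
  apply Finset.sum_nonneg
  intro G _
  have hw := wt_nonneg n p h0 h1 G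
  split_ifs <;> simp [hw]

theorem gnp_compl (n : ℕ) (p : ℝ) (P : SimpleGraph (Fin n) → Prop) :
    gnpProb n p P = 1 - gnpProb n p (fun G => ¬ P G) := by
  rw [gnp_eq, gnp_eq, ← sum_wt n p, ← Finset.sum_sub_distrib]
  refine Finset.sum_congr rfl fun G _ => ?_
  by_cases h : P G <;> simp [h]

theorem gnp_union {ι : Type*} (n : ℕ) (p : ℝ) (h0 : 0 ≤ p) (h1 : p ≤ 1) (s : Finset ι)
    (P : ι → SimpleGraph (Fin n) → Prop) :
    gnpProb n p (fun G => ∃ i ∈ s, P i G) ≤ ∑ i ∈ s, gnpProb n p (P i) := by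
  simp only [gnp_eq]
  rw [Finset.sum_comm]
  apply Finset.sum_le_sum
  intro G _
  have hw := wt_nonneg n p h0 h1 G
  have hnn : ∀ i ∈ s, 0 ≤ (if P i G then wt n p G else 0) := by
    intro i _; split_ifs <;> simp [hw]
  by_cases hG : ∃ i ∈ s, P i G
  · rw [if_pos hG]
    obtain ⟨i, hi, hPi⟩ := hG
    have := Finset.single_le_sum hnn hi
    rwa [if_pos hPi] at this
  · rw [if_neg hG]; exact Finset.sum_nonneg hnn

theorem gnp_or (n : ℕ) (p : ℝ) (h0 : 0 ≤ p) (h1 : p ≤ 1)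
    (P Q : SimpleGraph (Fin n) → Prop) :
    gnpProb n p (fun G => P G ∨ Q G) ≤ gnpProb n p P + gnpProb n p Q := by
  simp only [gnp_eq]
  rw [← Finset.sum_add_distrib]
  apply Finset.sum_le_sum
  intro G _
  have hw := wt_nonneg n p h0 h1 G
  by_cases h : P G <;> by_cases h' : Q G <;> simp [h, h', hw]

/-- few edges -/
theorem probA (p r : ℝ) (h0 : 0 ≤ p) (hpr : p < r) (hr : r ≤ 1) :
    Tendsto (fun n => gnpProb n p (fun G => ¬ ((#{q : Fin n × Fin n | G.Adj q.1 q.2} : ℝ) ≤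
      r * (Fintype.card (Fin n)) ^ 2))) atTop (nhds 0) := by
  set s := r - p with hs
  have hs0 : 0 < s := by linarith
  have hs1 : s ≤ 1 := by linarith
  have hp1 : p < 1 := by linarith
  have hexp : Real.exp s - 1 ≤ s + s ^ 2 := by
    have := Real.abs_exp_sub_one_sub_id_le (x := s) (by rw [abs_of_pos hs0]; exact hs1)
    have := (abs_le.1 this).2
    linarith
  set δ := s * r - p * (Real.exp s - 1) with hδ
  have hδ0 : 0 < δ := by
    have : p * (Real.exp s - 1) ≤ p * (s + s ^ 2) := by gcongr
    have h2 : 0 < s ^ 2 * (1 - p) := by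
      have : 0 < 1 - p := by linarith
      positivity
    have : r = p + s := by rw [hs]; ring
    nlinarith
  have hbound : ∀ n, gnpProb n p (fun G => ¬ ((#{q : Fin n × Fin n | G.Adj q.1 q.2} : ℝ) ≤
      r * (Fintype.card (Fin n)) ^ 2)) ≤ Real.exp (- (δ * (n.choose 2 : ℕ))) := by
    intro n
    set E := (⊤ : SimpleGraph (Fin n)).edgeFinset with hE
    have hEc : #E = n.choose 2 := by
      rw [hE, SimpleGraph.card_edgeFinset_top_eq_card_choose_two, Fintype.card_fin]
    refine (markov n p s (s * (r * (n.choose 2 : ℕ))) h0 hp1.le E subset_rfl _ ?_).trans ?_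
    · intro G hG
      rw [not_le, Fintype.card_fin] at hG
      have h2 : #{q : Fin n × Fin n | G.Adj q.1 q.2} = 2 * #{e ∈ E | e ∈ G.edgeSet} := by
        have e1 : ({e ∈ E | e ∈ G.edgeSet} : Finset _) = G.edgeFinset := by
          ext e
          simp only [mem_filter, SimpleGraph.mem_edgeFinset, hE]
          constructor
          · exact fun h => h.2
          · exact fun h => ⟨SimpleGraph.edgeSet_mono le_top h, h⟩
        rw [e1, ← SimpleGraph.sum_degrees_eq_twice_card_edges, card_pairs]
        refine Finset.sum_congr rfl fun v _ => ?_
        rw [← SimpleGraph.card_neighborFinset_eq_degree, SimpleGraph.neighborFinset_eq_filter]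
      rw [h2] at hG
      push_cast at hG
      have h3 : ((n.choose 2 : ℕ) : ℝ) = n * (n - 1) / 2 := Nat.cast_choose_two ℝ n
      apply mul_le_mul_of_nonneg_left _ hs0.le
      rw [h3]
      have : 0 ≤ r * n := by
        have : 0 ≤ r := by linarith
        positivity
      nlinarith
    · rw [hEc]
      apply le_of_eq
      congr 1
      rw [hδ]; ring
  refine squeeze_zero (fun n => gnp_nonneg n p h0 hp1.le _) hbound ?_
  apply Real.tendsto_exp_neg_atTop_nhds_zero.comp
  apply Tendsto.const_mul_atTop hδ0
  apply tendsto_natCast_atTop_atTop.comp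
  rw [tendsto_atTop_atTop]
  intro b
  refine ⟨b + 2, fun a ha => ?_⟩
  have : (b + 2).choose 2 ≤ a.choose 2 := Nat.choose_le_choose 2 ha
  refine le_trans ?_ this
  have h := Nat.choose_symm_add (a := b) (b := 2)
  have h5 : (b + 2).choose 2 = (b+1).choose 1 + (b+1).choose 2 := Nat.choose_succ_succ' (b+1) 1
  rw [Nat.choose_one_right] at h5
  omega

theorem cardF (n : ℕ) (X Y : Finset (Fin n)) :
    #X * #Y ≤ n + 2 * #(((X ×ˢ Y).filter (fun q => q.1 ≠ q.2)).image (fun q => s(q.1, q.2))) := by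
  set Z := (X ×ˢ Y).filter (fun q => q.1 ≠ q.2) with hZ
  have h1 : #Z ≤ 2 * #(Z.image (fun q => s(q.1, q.2))) := by
    apply Finset.card_le_mul_card_image
    intro e _
    induction e using Sym2.ind with
    | _ a b =>
      refine (Finset.card_le_card (t := {(a, b), (b, a)}) ?_).trans Finset.card_le_two
      rintro ⟨x, y⟩ h
      have := (mem_filter.1 h).2
      simp only [Sym2.eq_iff] at this
      simp only [mem_insert, mem_singleton, Prod.mk.injEq]
      exact this
  have h2 : #(X ×ˢ Y) = #Z + #((X ×ˢ Y).filter (fun q => ¬ (q.1 ≠ q.2))) :=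
    (Finset.card_filter_add_card_filter_not _).symm
  have h3 : #((X ×ˢ Y).filter (fun q => ¬ (q.1 ≠ q.2))) ≤ n := by
    have : #((X ×ˢ Y).filter (fun q => ¬ (q.1 ≠ q.2))) ≤ #(univ : Finset (Fin n)) := by
      apply Finset.card_le_card_of_injOn Prod.fst (fun _ _ => mem_univ _)
      rintro ⟨a, b⟩ h ⟨a', b'⟩ h' hh
      simp only [coe_filter, Set.mem_ofPred_eq, not_not] at h h'
      simp only at hh
      have := h.2; have := h'.2
      simp only [Prod.mk.injEq]
      constructor
      · exact hh
      · rw [← h.2, ← h'.2]; exact hh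
    simpa using this
  rw [card_product] at h2
  omega

theorem probB (p ε : ℝ) (h0 : 0 < p) (hp1 : p ≤ 1) (hε : 0 < ε) :
    Tendsto (fun n => gnpProb n p (fun G => ¬ (∀ X Y : Finset (Fin n),
      ε * Fintype.card (Fin n) ≤ #X → ε * Fintype.card (Fin n) ≤ #Y →
      p * ε ^ 2 / 16 * (Fintype.card (Fin n)) ^ 2 ≤ #{q ∈ X ×ˢ Y | G.Adj q.1 q.2})))
      atTop (nhds 0) := by
  set c := p * ε ^ 2 / 16 with hc
  have hc0 : 0 < c := by positivity
  have hexp : Real.exp (-1) - 1 ≤ - (1/2) := by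
    have h2 : (2 : ℝ) ≤ Real.exp 1 := by have := Real.add_one_le_exp (1 : ℝ); linarith
    rw [Real.exp_neg]
    have : (Real.exp 1)⁻¹ ≤ 2⁻¹ := inv_anti₀ (by norm_num) h2
    linarith
  have hbound : ∀ n : ℕ, 2 / ε ^ 2 ≤ (n : ℝ) → gnpProb n p (fun G => ¬ (∀ X Y : Finset (Fin n),
      ε * Fintype.card (Fin n) ≤ #X → ε * Fintype.card (Fin n) ≤ #Y →
      c * (Fintype.card (Fin n)) ^ 2 ≤ #{q ∈ X ×ˢ Y | G.Adj q.1 q.2})) ≤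
      4 ^ n * Real.exp (- (c * n ^ 2)) := by
    intro n hn
    rw [div_le_iff₀ (by positivity)] at hn
    set I : Finset (Finset (Fin n) × Finset (Fin n)) :=
      {i | ε * n ≤ #i.1 ∧ ε * n ≤ #i.2} with hI
    have hIc : (#I : ℝ) ≤ 4 ^ n := by
      have : #I ≤ 4 ^ n := by
        refine (Finset.card_le_univ _).trans ?_
        rw [Fintype.card_prod, Fintype.card_finset, Fintype.card_fin, ← mul_pow]
        norm_num
      exact_mod_cast this
    have hstep : ∀ i ∈ I, gnpProb n p
        (fun G => (#{q ∈ i.1 ×ˢ i.2 | G.Adj q.1 q.2} : ℝ) < c * n ^ 2) ≤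
        Real.exp (- (c * n ^ 2)) := by
      rintro ⟨X, Y⟩ hi
      simp only [hI, mem_filter, mem_univ, true_and] at hi
      simp only
      set F := ((X ×ˢ Y).filter (fun q => q.1 ≠ q.2)).image (fun q => s(q.1, q.2)) with hF
      have hFE : F ⊆ (⊤ : SimpleGraph (Fin n)).edgeFinset := by
        intro e he
        rw [hF, mem_image] at he
        obtain ⟨q, hq, rfl⟩ := he
        simpa using (mem_filter.1 hq).2
      have hFc : ε ^ 2 * n ^ 2 / 4 ≤ #F := by
        have h1 : (#X : ℝ) * #Y ≤ n + 2 * #F := by exact_mod_cast cardF n X Y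
        have h2 : (ε * n) * (ε * n) ≤ (#X : ℝ) * #Y :=
          mul_le_mul hi.1 hi.2 (by positivity) (by positivity)
        have h3 : (2 : ℝ) * n ≤ n * ε ^ 2 * n := by gcongr
        nlinarith
      refine (markov n p (-1) (-(c * n ^ 2)) h0.le hp1 F hFE _ ?_).trans ?_
      · intro G hG
        have : #{e ∈ F | e ∈ G.edgeSet} ≤ #{q ∈ X ×ˢ Y | G.Adj q.1 q.2} := by
          refine (Finset.card_le_card (t := ({q ∈ X ×ˢ Y | G.Adj q.1 q.2}).image
            (fun q => s(q.1, q.2))) ?_).trans Finset.card_image_le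
          intro e he
          rw [mem_filter, hF, mem_image] at he
          obtain ⟨⟨q, hq, rfl⟩, hG⟩ := he
          rw [mem_image]
          refine ⟨q, ?_, rfl⟩
          rw [mem_filter]
          exact ⟨(mem_filter.1 hq).1, by simpa using hG⟩
        have : (#{e ∈ F | e ∈ G.edgeSet} : ℝ) ≤ #{q ∈ X ×ˢ Y | G.Adj q.1 q.2} := by
          exact_mod_cast this
        linarith
      · apply Real.exp_le_exp.2
        have h1 : p * (Real.exp (-1) - 1) ≤ p * (-(1/2)) := by gcongr
        have h2 : (#F : ℝ) * (p * (Real.exp (-1) - 1)) ≤ #F * (p * (-(1/2))) := by gcongr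
        have h3 : ε ^ 2 * n ^ 2 / 4 * (p / 2) ≤ #F * (p / 2) := by gcongr
        have h4 : c * n ^ 2 * 2 = ε ^ 2 * n ^ 2 / 4 * (p / 2) := by rw [hc]; ring
        linarith
    calc _ ≤ gnpProb n p (fun G => ∃ i ∈ I,
          (#{q ∈ i.1 ×ˢ i.2 | G.Adj q.1 q.2} : ℝ) < c * n ^ 2) := by
          apply gnp_mono n p h0.le hp1
          intro G hG
          push Not at hG
          obtain ⟨X, Y, hX, hY, h⟩ := hG
          rw [Fintype.card_fin] at hX hY h
          exact ⟨(X, Y), by simp [hI, hX, hY], h⟩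
      _ ≤ ∑ i ∈ I, gnpProb n p
          (fun G => (#{q ∈ i.1 ×ˢ i.2 | G.Adj q.1 q.2} : ℝ) < c * n ^ 2) :=
          gnp_union n p h0.le hp1 I _
      _ ≤ #I • Real.exp (- (c * n ^ 2)) := Finset.sum_le_card_nsmul _ _ _ hstep
      _ ≤ _ := by rw [nsmul_eq_mul]; gcongr
  have hlim : Tendsto (fun n : ℕ => (4 : ℝ) ^ n * Real.exp (- (c * n ^ 2))) atTop (nhds 0) := by
    have h1 : ∀ n : ℕ, (4 : ℝ) ^ n * Real.exp (- (c * n ^ 2)) =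
        Real.exp (-((n : ℝ) * (c * n - Real.log 4))) := by
      intro n
      have : (4 : ℝ) ^ n = Real.exp (n * Real.log 4) := by
        rw [Real.exp_nat_mul, Real.exp_log (by norm_num)]
      rw [this, ← Real.exp_add]
      congr 1; ring
    simp only [h1]
    apply Real.tendsto_exp_neg_atTop_nhds_zero.comp
    have hn : Tendsto (fun n : ℕ => (n : ℝ)) atTop atTop := tendsto_natCast_atTop_atTop
    apply hn.atTop_mul_atTop₀
    exact tendsto_atTop_add_const_right _ _ (hn.const_mul_atTop hc0)
  refine squeeze_zero' (Eventually.of_forall fun n => gnp_nonneg n p h0.le hp1 _) ?_ hlim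
  filter_upwards [tendsto_natCast_atTop_atTop.eventually_ge_atTop (2 / ε ^ 2)] with n hn
  exact hbound n hn

end prob

/-- for fixed `p ∈ [0, 1/2)`, a.a.s. every orientation of `G(n,p)`
contains a Seymour vertex. -/
theorem stmt_0 (p : ℝ) (hp0 : 0 ≤ p) (hp1 : p < 1/2) :
    Tendsto (fun n => gnpProb n p (fun G =>
        ∀ D : Fin n → Fin n → Prop, Orients D G → ∃ v, SeymourVertex D v))
      atTop (nhds 1) := by
  classical
  have hp1' : p ≤ 1 := by linarith
  rcases hp0.eq_or_lt with h0 | h0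
  · subst h0
    apply tendsto_const_nhds.congr'
    filter_upwards [eventually_gt_atTop 0] with n hn
    have hbot : ∀ D : Fin n → Fin n → Prop, Orients D ⊥ → ∃ v, SeymourVertex D v := by
      intro D hD
      refine ⟨⟨0, hn⟩, ?_⟩
      unfold SeymourVertex
      have : outNbr D ⟨0, hn⟩ = ∅ := by
        ext w
        simp only [outNbr, Set.mem_ofPred_eq, Set.mem_empty_iff_false, iff_false]
        rintro ⟨_, h⟩
        have := (hD.2 _ _).2 (Or.inl h)
        simp at this
      rw [this]; simp
    rw [gnp_eq, Finset.sum_eq_single ⊥]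
    · rw [if_pos hbot]; simp [wt]
    · intro G _ hG
      have : G.edgeSet.ncard ≠ 0 := by
        rw [Ne, Set.ncard_eq_zero]
        simpa using hG
      simp [wt, this]
    · simp
  · set r : ℝ := (p + 1 / 2) / 2 with hr
    set γ : ℝ := 1 / 2 - p with hγ
    have hγ0 : 0 < γ := by linarith
    set c : ℝ := p * (γ / 8) ^ 2 / 16 with hc
    have hc0 : 0 < c := by positivity
    set ε : ℝ := γ ^ 2 / 16 * (c / 4) ^ 2 with hε
    have hε0 : 0 < ε := by positivity
    have hεγ : ε < γ ^ 2 / 8 * (c / 4) ^ 2 := by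
      have : 0 < γ ^ 2 * (c / 4) ^ 2 := by positivity
      rw [hε]; linarith
    have tA := probA p r hp0 (by linarith) (by linarith)
    have tB := probB p (γ / 8) h0 hp1' (by positivity)
    have tC := probB p ε h0 hp1' hε0
    have hlim := (tA.add (tB.add tC)).const_sub 1
    simp only [add_zero, sub_zero] at hlim
    refine tendsto_of_tendsto_of_tendsto_of_le_of_le' hlim tendsto_const_nhds ?_ ?_
    · filter_upwards [eventually_gt_atTop 0] with n hn
      rw [gnp_compl n p (fun G =>
        ∀ D : Fin n → Fin n → Prop, Orients D G → ∃ v, SeymourVertex D v)]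
      apply sub_le_sub_left
      refine le_trans ?_ ((gnp_or n p hp0 hp1' _ _).trans
        (add_le_add le_rfl (gnp_or n p hp0 hp1' _ _)))
      apply gnp_mono n p hp0 hp1'
      intro G hG
      by_contra hcon
      push Not at hcon
      obtain ⟨hA, hB, hC⟩ := hcon
      apply hG
      intro D hD
      have hn' : 0 < Fintype.card (Fin n) := by rw [Fintype.card_fin]; exact hn
      refine det_main G D hD r γ c ε hn' hγ0 hc0 hε0.le hεγ (by rw [hr, hγ]; linarith) hA
        (fun X hX => hB X X hX hX) ?_
      intro X Y hX hY
      have h := hC X Y hX hY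
      have hpos : 0 < p * ε ^ 2 / 16 * (Fintype.card (Fin n) : ℝ) ^ 2 := by positivity
      have h2 := hpos.trans_le h
      have h3 := Finset.card_pos.1 (Nat.cast_pos.1 h2)
      obtain ⟨q, hq⟩ := h3
      rw [Finset.mem_filter, Finset.mem_product] at hq
      exact ⟨q.1, hq.1.1, q.2, hq.1.2, hq.2⟩
    · refine Eventually.of_forall fun n => ?_
      rw [gnp_compl]
      have := gnp_nonneg n p hp0 hp1' (fun G => ¬ ∀ D : Fin n → Fin n → Prop, Orients D G → ∃ v, SeymourVertex D v)
      linarith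
end

section
/- Let p ∈ (1/2, 1) be a fixed constant. If there exists an oriented graph with no Seymour vertex, then asymptotically almost surely the binomial random graph G(n,p) admits an orientation with no Seymour vertex. -/
open Filter

section SeyDet
open Finset
open scoped Classical

lemma sey_step {n : ℕ} (G : SimpleGraph (Fin n)) (S : Finset (Fin n)) (v : Fin n) (hv : v ∉ S)
    (hdeg : S.card < 2 * (S.filter (fun w => G.Adj v w)).card)
    (D : Fin n → Fin n → Prop) (hor : OrientedGraph D)
    (hsup : ∀ u w, D u w → u ∈ S ∧ w ∈ S)
    (hadj : ∀ u ∈ S, ∀ w ∈ S, (G.Adj u w ↔ (D u w ∨ D w u)))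
    (hns : ∀ u ∈ S, ¬ SeymourVertex D u) :
    ∃ D' : Fin n → Fin n → Prop, OrientedGraph D' ∧
      (∀ u w, D' u w → u ∈ insert v S ∧ w ∈ insert v S) ∧
      (∀ u ∈ insert v S, ∀ w ∈ insert v S, (G.Adj u w ↔ (D' u w ∨ D' w u))) ∧
      (∀ u ∈ insert v S, ¬ SeymourVertex D' u) := by
  have key : ∀ u ∈ S, ∀ w, (D u w ∨ (u = v ∧ w ∈ S ∧ G.Adj v w)) ↔ D u w := by
    intro u hu w
    constructor
    · rintro (h | ⟨rfl, _⟩)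
      · exact h
      · exact absurd hu hv
    · exact Or.inl
  refine ⟨fun u w => D u w ∨ (u = v ∧ w ∈ S ∧ G.Adj v w), ?_, ?_, ?_, ?_⟩
  · rintro u w (h | ⟨rfl, hw, h⟩) (h' | ⟨rfl, hw', h'⟩)
    · exact hor _ _ h h'
    · exact hv (hsup _ _ h).2
    · exact hv (hsup _ _ h').2
    · exact hv hw
  · rintro u w (h | ⟨rfl, hw, h⟩)
    · exact ⟨mem_insert_of_mem (hsup _ _ h).1, mem_insert_of_mem (hsup _ _ h).2⟩
    · exact ⟨mem_insert_self _ _, mem_insert_of_mem hw⟩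
  · intro u hu w hw
    rw [mem_insert] at hu hw
    rcases hu with rfl | hu <;> rcases hw with rfl | hw
    · constructor
      · intro h; exact absurd h (G.loopless.irrefl _)
      · rintro ((h | ⟨_, h, _⟩) | (h | ⟨_, h, _⟩))
        · exact absurd (hsup _ _ h).1 hv
        · exact absurd h hv
        · exact absurd (hsup _ _ h).1 hv
        · exact absurd h hv
    · constructor
      · intro h; exact Or.inl (Or.inr ⟨rfl, hw, h⟩)
      · rintro ((h | ⟨_, _, h⟩) | (h | ⟨_, h, _⟩))
        · exact absurd (hsup _ _ h).1 hv
        · exact h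
        · exact absurd (hsup _ _ h).2 hv
        · exact absurd h hv
    · constructor
      · intro h; exact Or.inr (Or.inr ⟨rfl, hu, h.symm⟩)
      · rintro ((h | ⟨_, h, _⟩) | (h | ⟨_, _, h⟩))
        · exact absurd (hsup _ _ h).2 hv
        · exact absurd h hv
        · exact absurd (hsup _ _ h).1 hv
        · exact h.symm
    · have := hadj u hu w hw
      rw [← key u hu w, ← key w hw u] at this; exact this
  · intro u hu
    rw [mem_insert] at hu
    rcases hu with rfl | hu
    · unfold SeymourVertex
      have h1 : outNbr (fun a w => D a w ∨ (a = u ∧ w ∈ S ∧ G.Adj u w)) u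
          = ((S.filter (fun w => G.Adj u w) : Finset (Fin n)) : Set (Fin n)) := by
        ext w
        simp only [outNbr, Set.mem_ofPred_eq, coe_filter]
        constructor
        · rintro ⟨_, h | h⟩
          · exact absurd (hsup _ _ h).1 hv
          · exact h.2
        · intro h
          exact ⟨fun e => hv (e ▸ h.1), Or.inr ⟨by trivial, h⟩⟩
      have h2 : outNbr2 (fun a w => D a w ∨ (a = u ∧ w ∈ S ∧ G.Adj u w)) u
          ⊆ ((S.filter (fun w => ¬ G.Adj u w) : Finset (Fin n)) : Set (Fin n)) := by
        intro w hw
        unfold outNbr2 at hw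
        rw [h1] at hw
        obtain ⟨hw1, x, hx, hxw⟩ := hw
        simp only [Set.mem_insert_iff, coe_filter, Set.mem_ofPred_eq, not_or, not_and] at hw1 hx ⊢
        have hwS : w ∈ S := by
          rcases hxw with h | h
          · exact (hsup _ _ h).2
          · exact h.2.1
        exact ⟨hwS, hw1.2 hwS⟩
      have h3 := Set.ncard_le_ncard h2 (Finset.finite_toSet _)
      rw [h1]
      rw [Set.ncard_coe_finset] at h3 ⊢
      have h4 := Finset.card_filter_add_card_filter_not (s := S) (fun w => G.Adj u w)
      omega
    · have h1 : outNbr (fun a w => D a w ∨ (a = v ∧ w ∈ S ∧ G.Adj v w)) u = outNbr D u := by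
        ext w
        simp only [outNbr, Set.mem_ofPred_eq]
        rw [key u hu w]
      have h2 : outNbr2 (fun a w => D a w ∨ (a = v ∧ w ∈ S ∧ G.Adj v w)) u = outNbr2 D u := by
        unfold outNbr2
        rw [h1]
        ext w
        simp only [Set.mem_ofPred_eq]
        refine and_congr_right fun _ => ?_
        refine exists_congr fun x => and_congr_right fun hx => ?_
        exact key x (hsup _ _ hx.2).2 w
      unfold SeymourVertex
      rw [h1, h2]
      exact hns u hu

lemma sey_grow {n : ℕ} (G : SimpleGraph (Fin n))
    (hcut : ∀ S : Finset (Fin n), S.Nonempty → S ≠ univ →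
      ∃ v, v ∉ S ∧ S.card < 2 * (S.filter (fun w => G.Adj v w)).card)
    (S : Finset (Fin n)) (hS : S.Nonempty)
    (hD : ∃ D : Fin n → Fin n → Prop, OrientedGraph D ∧
    (∀ u w, D u w → u ∈ S ∧ w ∈ S) ∧
    (∀ u ∈ S, ∀ w ∈ S, (G.Adj u w ↔ (D u w ∨ D w u))) ∧
    (∀ u ∈ S, ¬ SeymourVertex D u)) :
    ∃ D : Fin n → Fin n → Prop, Orients D G ∧ ∀ v, ¬ SeymourVertex D v := by
  induction hk : Sᶜ.card generalizing S with
  | zero =>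
    have : S = univ := by
      rw [card_eq_zero, compl_eq_empty_iff] at hk; exact hk
    subst this
    obtain ⟨D, h1, h2, h3, h4⟩ := hD
    exact ⟨D, ⟨h1, fun u v => h3 u (mem_univ _) v (mem_univ _)⟩, fun v => h4 v (mem_univ _)⟩
  | succ k ih =>
    have hne : S ≠ univ := by
      rintro rfl
      simp at hk
    obtain ⟨v, hv, hdeg⟩ := hcut S hS hne
    obtain ⟨D, h1, h2, h3, h4⟩ := hD
    refine ih (insert v S) (insert_nonempty _ _) (sey_step G S v hv hdeg D h1 h2 h3 h4) ?_
    rw [card_compl] at hk ⊢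
    rw [card_insert_of_notMem hv]
    omega

lemma sey_copy {m n : ℕ} (f : Fin m → Fin n) (hf : Function.Injective f) (hm : 0 < m)
    (D : Fin m → Fin m → Prop) (hor : OrientedGraph D) (hns : ∀ v, ¬ SeymourVertex D v)
    (G : SimpleGraph (Fin n)) (hG : ∀ i j, G.Adj (f i) (f j) ↔ (D i j ∨ D j i))
    (hcut : ∀ S : Finset (Fin n), S.Nonempty → S ≠ univ →
      ∃ v, v ∉ S ∧ S.card < 2 * (S.filter (fun w => G.Adj v w)).card) :
    ∃ D : Fin n → Fin n → Prop, Orients D G ∧ ∀ v, ¬ SeymourVertex D v := by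
  set D' : Fin n → Fin n → Prop := fun u w => ∃ i j, f i = u ∧ f j = w ∧ D i j with hD'
  have hiff : ∀ i j, D' (f i) (f j) ↔ D i j := by
    intro i j
    constructor
    · rintro ⟨i', j', h1, h2, h⟩
      rwa [← hf h1, ← hf h2]
    · intro h; exact ⟨i, j, rfl, rfl, h⟩
  apply sey_grow G hcut (univ.image f) ⟨f ⟨0, hm⟩, mem_image_of_mem _ (mem_univ _)⟩
  refine ⟨D', ?_, ?_, ?_, ?_⟩
  · rintro u w ⟨i, j, rfl, rfl, h⟩ h'
    exact hor _ _ h ((hiff _ _).1 h')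
  · rintro u w ⟨i, j, rfl, rfl, h⟩
    simp
  · intro u hu w hw
    obtain ⟨i, _, rfl⟩ := mem_image.1 hu
    obtain ⟨j, _, rfl⟩ := mem_image.1 hw
    rw [hiff, hiff]; exact hG i j
  · intro u hu
    obtain ⟨i, _, rfl⟩ := mem_image.1 hu
    have h1 : outNbr D' (f i) = f '' outNbr D i := by
      ext w
      constructor
      · rintro ⟨hw, i', j, h1, rfl, h⟩
        exact ⟨j, ⟨fun e => hw (by rw [e]), by rwa [← hf h1]⟩, rfl⟩
      · rintro ⟨j, ⟨hj, h⟩, rfl⟩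
        exact ⟨fun e => hj (hf e), (hiff _ _).2 h⟩
    have h2 : outNbr2 D' (f i) = f '' outNbr2 D i := by
      unfold outNbr2
      rw [h1]
      ext w
      constructor
      · rintro ⟨hw, x, ⟨j, hj, rfl⟩, ⟨j', l, hj', rfl, h⟩⟩
        have := hf hj'
        subst this
        refine ⟨l, ⟨?_, j', hj, h⟩, rfl⟩
        rintro (rfl | h)
        · exact hw (Or.inl rfl)
        · exact hw (Or.inr ⟨_, h, rfl⟩)
      · rintro ⟨l, ⟨hl, j, hj, h⟩, rfl⟩
        refine ⟨?_, f j, ⟨j, hj, rfl⟩, (hiff _ _).2 h⟩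
        rintro (h | ⟨l', h, e⟩)
        · exact hl (Or.inl (hf h))
        · exact hl (Or.inr (hf e ▸ h))
    unfold SeymourVertex
    rw [h1, h2, Set.ncard_image_of_injective _ hf, Set.ncard_image_of_injective _ hf]
    exact hns i

end SeyDet

section SeyProb
open Finset
open scoped Classical

noncomputable def seyEx {α : Type*} (p : ℝ) (E : Finset α) (φ : Finset α → ℝ) : ℝ :=
  ∑ T ∈ E.powerset, p ^ T.card * (1 - p) ^ (E.card - T.card) * φ T

lemma seyEx_congr {α : Type*} {p : ℝ} {E : Finset α} {φ ψ : Finset α → ℝ}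
    (h : ∀ T ⊆ E, φ T = ψ T) : seyEx p E φ = seyEx p E ψ :=
  Finset.sum_congr rfl fun T hT => by rw [h T (mem_powerset.1 hT)]

lemma seyEx_mono {α : Type*} {p : ℝ} (hp0 : 0 ≤ p) (hp1 : p ≤ 1) {E : Finset α}
    {φ ψ : Finset α → ℝ}
    (h : ∀ T ⊆ E, φ T ≤ ψ T) : seyEx p E φ ≤ seyEx p E ψ :=
  Finset.sum_le_sum fun T hT => mul_le_mul_of_nonneg_left (h T (mem_powerset.1 hT))
    (mul_nonneg (pow_nonneg hp0 _) (pow_nonneg (by linarith) _))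

lemma seyEx_mul {α : Type*} {p : ℝ} {E : Finset α} (c : ℝ) (φ : Finset α → ℝ) :
    seyEx p E (fun T => c * φ T) = c * seyEx p E φ := by
  unfold seyEx; rw [mul_sum]; exact Finset.sum_congr rfl fun T _ => by ring

lemma seyEx_mul' {α : Type*} {p : ℝ} {E : Finset α} (c : ℝ) (φ : Finset α → ℝ) :
    seyEx p E (fun T => φ T * c) = seyEx p E φ * c := by
  unfold seyEx; rw [sum_mul]; exact Finset.sum_congr rfl fun T _ => by ring

lemma seyEx_add {α : Type*} {p : ℝ} {E : Finset α} (φ ψ : Finset α → ℝ) :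
    seyEx p E (fun T => φ T + ψ T) = seyEx p E φ + seyEx p E ψ := by
  unfold seyEx; rw [← sum_add_distrib]; exact Finset.sum_congr rfl fun T _ => by ring

lemma seyEx_sub {α : Type*} {p : ℝ} {E : Finset α} (φ ψ : Finset α → ℝ) :
    seyEx p E (fun T => φ T - ψ T) = seyEx p E φ - seyEx p E ψ := by
  unfold seyEx; rw [← sum_sub_distrib]; exact Finset.sum_congr rfl fun T _ => by ring

lemma seyEx_sum {α ι : Type*} {p : ℝ} {E : Finset α} (s : Finset ι) (φ : ι → Finset α → ℝ) :
    seyEx p E (fun T => ∑ i ∈ s, φ i T) = ∑ i ∈ s, seyEx p E (φ i) := by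
  unfold seyEx; rw [sum_comm]; exact Finset.sum_congr rfl fun T _ => by rw [mul_sum]

lemma seyEx_insert {α : Type*} {p : ℝ} {E : Finset α} {a : α} (ha : a ∉ E)
    (φ : Finset α → ℝ) :
    seyEx p (insert a E) φ
      = (1 - p) * seyEx p E φ + p * seyEx p E (fun T => φ (insert a T)) := by
  unfold seyEx
  rw [sum_powerset_insert ha, mul_sum, mul_sum]
  congr 1
  · refine Finset.sum_congr rfl fun T hT => ?_
    have h1 := card_le_card (mem_powerset.1 hT)
    rw [card_insert_of_notMem ha, Nat.succ_sub h1, pow_succ]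
    ring
  · refine Finset.sum_congr rfl fun T hT => ?_
    have h2 : a ∉ T := fun h => ha (mem_powerset.1 hT h)
    rw [card_insert_of_notMem ha, card_insert_of_notMem h2, Nat.add_sub_add_right, pow_succ]
    ring

lemma seyEx_one {α : Type*} {p : ℝ} (E : Finset α) : seyEx p E (fun _ => 1) = 1 := by
  induction E using Finset.induction_on with
  | empty => simp [seyEx]
  | insert a E ha ih => rw [seyEx_insert ha, ih]; ring

lemma seyEx_const {α : Type*} {p : ℝ} (E : Finset α) (c : ℝ) : seyEx p E (fun _ => c) = c := by
  have := seyEx_mul (p := p) (E := E) c (fun _ => 1)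
  rw [seyEx_one] at this
  simpa using this

lemma seyEx_union {α : Type*} {p : ℝ} (E F : Finset α) (h : Disjoint E F) (φ : Finset α → ℝ) :
    seyEx p (E ∪ F) φ = seyEx p F (fun R => seyEx p E (fun T => φ (T ∪ R))) := by
  induction F using Finset.induction_on generalizing φ with
  | empty => simp [seyEx]
  | insert a F ha ih =>
    rw [disjoint_insert_right] at h
    rw [union_insert, seyEx_insert (by simp [ha, h.1]), seyEx_insert ha, ih h.2, ih h.2]
    simp only [union_insert]

lemma seyEx_split {α : Type*} {p : ℝ} (E F : Finset α) (h : F ⊆ E) (φ : Finset α → ℝ) :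
    seyEx p E φ = seyEx p F (fun R => seyEx p (E \ F) (fun T => φ (T ∪ R))) := by
  rw [← seyEx_union _ _ sdiff_disjoint, sdiff_union_of_subset h]

lemma seyEx_eq {α : Type*} {p : ℝ} (F R₀ : Finset α) (h : R₀ ⊆ F) :
    seyEx p F (fun R => if R ≠ R₀ then (1:ℝ) else 0)
      = 1 - p ^ R₀.card * (1 - p) ^ (F.card - R₀.card) := by
  have h1 : seyEx p F (fun R => if R ≠ R₀ then (1:ℝ) else 0)
      = seyEx p F (fun _ => 1) - seyEx p F (fun R => if R = R₀ then (1:ℝ) else 0) := by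
    rw [← seyEx_sub]
    refine seyEx_congr fun T _ => ?_
    by_cases h : T = R₀ <;> simp [h]
  rw [h1, seyEx_one]
  congr 1
  unfold seyEx
  simp [h]

lemma seyEx_blocks {α ι : Type*} {p : ℝ} (q : ℝ) (I : Finset ι) (E : Finset α)
    (F R : ι → Finset α) (hRF : ∀ i, R i ⊆ F i) (hFE : ∀ i ∈ I, F i ⊆ E)
    (hdis : ∀ i j, i ≠ j → Disjoint (F i) (F j))
    (hq : ∀ i, p ^ (R i).card * (1 - p) ^ ((F i).card - (R i).card) = q) :
    seyEx p E (fun T => if ∀ i ∈ I, T ∩ F i ≠ R i then (1:ℝ) else 0) = (1 - q) ^ I.card := by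
  induction I using Finset.induction_on generalizing E with
  | empty => simp [seyEx_one]
  | insert i I hi ih =>
    have hE : ∀ j ∈ I, F j ⊆ E \ F i := by
      intro j hj
      rw [subset_sdiff]
      exact ⟨hFE j (mem_insert_of_mem hj), hdis j i (fun e => hi (e ▸ hj))⟩
    rw [seyEx_split E (F i) (hFE i (mem_insert_self _ _))]
    have key : seyEx p (F i) (fun S => seyEx p (E \ F i) (fun T =>
          if ∀ j ∈ insert i I, (T ∪ S) ∩ F j ≠ R j then (1:ℝ) else 0))
        = seyEx p (F i) (fun S => (if S ≠ R i then (1:ℝ) else 0) * (1 - q) ^ I.card) := by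
      refine seyEx_congr fun S hS => ?_
      rw [← ih (E \ F i) hE, ← seyEx_mul]
      refine seyEx_congr fun T hT => ?_
      have h1 : (T ∪ S) ∩ F i = S := by
        rw [union_inter_distrib_right, inter_eq_left.2 hS]
        have : T ∩ F i = ∅ := disjoint_iff_inter_eq_empty.1
          (disjoint_of_subset_left hT sdiff_disjoint)
        rw [this, empty_union]
      have h2 : ∀ j ∈ I, (T ∪ S) ∩ F j = T ∩ F j := by
        intro j hj
        rw [union_inter_distrib_right]
        have : S ∩ F j = ∅ := disjoint_iff_inter_eq_empty.1
          (disjoint_of_subset_left hS (hdis i j (fun e => hi (e ▸ hj))))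
        rw [this, union_empty]
      have h3 : (∀ j ∈ insert i I, (T ∪ S) ∩ F j ≠ R j) ↔
          (S ≠ R i ∧ ∀ j ∈ I, T ∩ F j ≠ R j) := by
        rw [forall_mem_insert, h1]
        refine and_congr_right fun _ => forall₂_congr fun j hj => ?_
        rw [h2 j hj]
      rw [if_congr h3 rfl rfl]
      by_cases a : S ≠ R i <;> by_cases b : ∀ j ∈ I, T ∩ F j ≠ R j <;> simp [a, b]
    rw [key, seyEx_mul', seyEx_eq _ _ (hRF i), hq, card_insert_of_notMem hi, pow_succ]
    ring

lemma sey_weight {p τ : ℝ} (hp0 : 1/2 < p) (hp1 : p < 1) (hτ : 0 ≤ τ) (hτ2 : τ ^ 2 = p * (1 - p))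
    (r N : ℕ) (h : 2 * r ≤ N) : p ^ r * (1 - p) ^ (N - r) ≤ τ ^ N := by
  have h0 : 0 < 1 - p := by linarith
  have hp : 0 < p := by linarith
  refine le_of_sq_le_sq ?_ (pow_nonneg hτ _)
  obtain ⟨d, rfl⟩ := Nat.exists_eq_add_of_le h
  have e : 2 * r + d - r = r + d := by omega
  rw [e, ← pow_mul, mul_comm (2 * r + d) 2, pow_mul, hτ2]
  have h1 : (1 - p) ^ d ≤ p ^ d := pow_le_pow_left₀ h0.le (by linarith) _
  calc (p ^ r * (1 - p) ^ (r + d)) ^ 2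
      = (p ^ (2 * r) * (1 - p) ^ (2 * r) * (1 - p) ^ d) * (1 - p) ^ d := by ring
    _ ≤ (p ^ (2 * r) * (1 - p) ^ (2 * r) * (1 - p) ^ d) * p ^ d :=
        mul_le_mul_of_nonneg_left h1 (by positivity)
    _ = (p * (1 - p)) ^ (2 * r + d) := by rw [mul_pow]; ring

lemma seyEx_cut {α : Type*} {p τ : ℝ} (hp0 : 1/2 < p) (hp1 : p < 1) (hτ : 0 ≤ τ)
    (hτ2 : τ ^ 2 = p * (1 - p)) (E C : Finset α) (h : C ⊆ E) :
    seyEx p E (fun T => if 2 * (T ∩ C).card ≤ C.card then (1:ℝ) else 0) ≤ (2 * τ) ^ C.card := by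
  rw [seyEx_split E C h]
  have key : seyEx p C (fun S => seyEx p (E \ C) (fun T =>
        if 2 * ((T ∪ S) ∩ C).card ≤ C.card then (1:ℝ) else 0))
      = seyEx p C (fun S => if 2 * S.card ≤ C.card then (1:ℝ) else 0) := by
    refine seyEx_congr fun S hS => ?_
    rw [← seyEx_const (p := p) (E \ C) (if 2 * S.card ≤ C.card then (1:ℝ) else 0)]
    refine seyEx_congr fun T hT => ?_
    have h1 : (T ∪ S) ∩ C = S := by
      rw [union_inter_distrib_right, inter_eq_left.2 hS]
      have : T ∩ C = ∅ := disjoint_iff_inter_eq_empty.1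
        (disjoint_of_subset_left hT sdiff_disjoint)
      rw [this, empty_union]
    rw [h1]
  rw [key]
  unfold seyEx
  calc _ ≤ ∑ T ∈ C.powerset, τ ^ C.card := by
        refine Finset.sum_le_sum fun T hT => ?_
        beta_reduce
        split_ifs with h
        · rw [mul_one]; exact sey_weight hp0 hp1 hτ hτ2 _ _ h
        · rw [mul_zero]; exact pow_nonneg hτ _
    _ = (2 * τ) ^ C.card := by
        rw [sum_const, card_powerset, nsmul_eq_mul, mul_pow]; push_cast; ring

lemma sey_gnp (n : ℕ) (p : ℝ) (P : SimpleGraph (Fin n) → Prop) :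
    gnpProb n p P = seyEx p (⊤ : SimpleGraph (Fin n)).edgeFinset
      (fun T => if P (SimpleGraph.fromEdgeSet (T : Set (Sym2 (Fin n)))) then (1:ℝ) else 0) := by
  unfold gnpProb seyEx
  refine Finset.sum_bij' (fun G _ => G.edgeFinset)
    (fun T _ => SimpleGraph.fromEdgeSet (T : Set (Sym2 (Fin n)))) ?_ ?_ ?_ ?_ ?_
  · intro G _
    rw [mem_powerset]
    exact SimpleGraph.edgeFinset_mono le_top
  · intro T _; exact mem_univ _
  · intro G _
    simp
  · intro T hT
    rw [mem_powerset] at hT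
    apply Finset.coe_injective
    simp only [SimpleGraph.coe_edgeFinset, SimpleGraph.edgeSet_fromEdgeSet]
    rw [sdiff_eq_left]
    rw [Set.disjoint_left]
    intro e he
    have := hT he
    rw [SimpleGraph.mem_edgeFinset] at this
    exact SimpleGraph.not_isDiag_of_mem_edgeSet _ this
  · intro G _
    have h1 : G.edgeSet.ncard = G.edgeFinset.card := by
      rw [← SimpleGraph.coe_edgeFinset, Set.ncard_coe_finset]
    have h2 : (⊤ : SimpleGraph (Fin n)).edgeFinset.card = n.choose 2 := by
      rw [SimpleGraph.card_edgeFinset_top_eq_card_choose_two, Fintype.card_fin]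
    beta_reduce
    rw [h1, h2, SimpleGraph.coe_edgeFinset, SimpleGraph.fromEdgeSet_edgeSet]
    split_ifs <;> simp

end SeyProb

section SeyMain
open Finset
open scoped Classical

noncomputable def seyCut {n : ℕ} (S : Finset (Fin n)) : Finset (Sym2 (Fin n)) :=
  (S ×ˢ Sᶜ).image (fun x => s(x.1, x.2))

lemma seyCut_card {n : ℕ} (S : Finset (Fin n)) : (seyCut S).card = S.card * (n - S.card) := by
  unfold seyCut
  rw [card_image_of_injOn, card_product, card_compl, Fintype.card_fin]
  rintro ⟨a, b⟩ hab ⟨c, d⟩ hcd h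
  simp only [coe_product, Set.mem_prod, mem_coe, mem_compl] at hab hcd
  simp only [Sym2.eq_iff] at h
  rcases h with ⟨rfl, rfl⟩ | ⟨rfl, rfl⟩
  · rfl
  · exact absurd hab.1 hcd.2

lemma seyCut_sub {n : ℕ} (S : Finset (Fin n)) :
    seyCut S ⊆ (⊤ : SimpleGraph (Fin n)).edgeFinset := by
  intro e he
  obtain ⟨⟨a, b⟩, hab, rfl⟩ := mem_image.1 he
  rw [mem_product, mem_compl] at hab
  rw [SimpleGraph.mem_edgeFinset, SimpleGraph.mem_edgeSet, SimpleGraph.top_adj]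
  intro h
  exact hab.2 ((show a = b from h) ▸ hab.1)

lemma seyCut_good {n : ℕ} (S : Finset (Fin n)) (T : Finset (Sym2 (Fin n)))
    (h : (seyCut S).card < 2 * (T ∩ seyCut S).card) :
    ∃ v, v ∉ S ∧ S.card < 2 * (S.filter (fun w =>
      (SimpleGraph.fromEdgeSet (T : Set (Sym2 (Fin n)))).Adj v w)).card := by
  by_contra hc
  push Not at hc
  have h1 : T ∩ seyCut S ⊆ Sᶜ.biUnion (fun v => (S.filter (fun w =>
      (SimpleGraph.fromEdgeSet (T : Set (Sym2 (Fin n)))).Adj v w)).image (fun w => s(w, v))) := by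
    intro e he
    obtain ⟨heT, he⟩ := mem_inter.1 he
    obtain ⟨⟨a, b⟩, hab, rfl⟩ := mem_image.1 he
    rw [mem_product] at hab
    refine mem_biUnion.2 ⟨b, hab.2, mem_image.2 ⟨a, mem_filter.2 ⟨hab.1, ?_⟩, rfl⟩⟩
    rw [SimpleGraph.fromEdgeSet_adj]
    refine ⟨?_, ?_⟩
    · rw [Sym2.eq_swap]; exact heT
    · rintro rfl; exact (mem_compl.1 hab.2) hab.1
  have h2 := (card_le_card h1).trans card_biUnion_le
  have h3 : 2 * ∑ v ∈ Sᶜ, ((S.filter (fun w =>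
      (SimpleGraph.fromEdgeSet (T : Set (Sym2 (Fin n)))).Adj v w)).image (fun w => s(w, v))).card
      ≤ ∑ v ∈ Sᶜ, S.card := by
    rw [mul_sum]
    refine Finset.sum_le_sum fun v hv => ?_
    exact (Nat.mul_le_mul_left 2 card_image_le).trans (hc v (mem_compl.1 hv))
  rw [sum_const, smul_eq_mul, card_compl, Fintype.card_fin, mul_comm (n - _)] at h3
  rw [seyCut_card] at h
  omega

lemma sey_unionbound (n : ℕ) (ρ σ : ℝ) (hσ0 : 0 ≤ σ) (hσ1 : σ ≤ 1) (hρ : σ ^ 2 = ρ) :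
    ∑ S ∈ (univ : Finset (Finset (Fin n))).filter (fun S => S.Nonempty ∧ S ≠ univ),
      ρ ^ (S.card * (n - S.card)) ≤ 2 * ((1 + σ ^ n) ^ n - 1) := by
  have hx : 0 ≤ σ ^ n := pow_nonneg hσ0 n
  have tot : ∑ S : Finset (Fin n), (σ ^ n) ^ S.card = (1 + σ ^ n) ^ n := by
    have := Finset.sum_pow_mul_eq_add_pow (σ ^ n) (1:ℝ) (univ : Finset (Fin n))
    simp only [one_pow, mul_one, card_univ, Fintype.card_fin, powerset_univ] at this
    rw [this, add_comm]
  have tot' : ∑ S : Finset (Fin n), (σ ^ n) ^ (n - S.card) = (1 + σ ^ n) ^ n := by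
    have := Finset.sum_pow_mul_eq_add_pow (1:ℝ) (σ ^ n) (univ : Finset (Fin n))
    simpa only [one_pow, one_mul, card_univ, Fintype.card_fin, powerset_univ] using this
  have b1 : ∑ S ∈ (univ : Finset (Finset (Fin n))).filter (fun S => S.Nonempty ∧ S ≠ univ),
      (σ ^ n) ^ S.card ≤ (1 + σ ^ n) ^ n - 1 := by
    rw [← tot, ← Finset.add_sum_erase univ _ (mem_univ (∅ : Finset (Fin n)))]
    simp only [card_empty, pow_zero, add_sub_cancel_left]
    refine Finset.sum_le_sum_of_subset_of_nonneg ?_ fun _ _ _ => pow_nonneg hx _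
    intro S hS
    rw [mem_filter] at hS
    rw [mem_erase]
    exact ⟨hS.2.1.ne_empty, mem_univ _⟩
  have b2 : ∑ S ∈ (univ : Finset (Finset (Fin n))).filter (fun S => S.Nonempty ∧ S ≠ univ),
      (σ ^ n) ^ (n - S.card) ≤ (1 + σ ^ n) ^ n - 1 := by
    rw [← tot', ← Finset.add_sum_erase univ _ (mem_univ (univ : Finset (Fin n)))]
    simp only [card_univ, Fintype.card_fin, Nat.sub_self, pow_zero, add_sub_cancel_left]
    refine Finset.sum_le_sum_of_subset_of_nonneg ?_ fun _ _ _ => pow_nonneg hx _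
    intro S hS
    rw [mem_filter] at hS
    rw [mem_erase]
    exact ⟨hS.2.2, mem_univ _⟩
  calc _ ≤ ∑ S ∈ (univ : Finset (Finset (Fin n))).filter (fun S => S.Nonempty ∧ S ≠ univ),
      ((σ ^ n) ^ S.card + (σ ^ n) ^ (n - S.card)) := by
        refine Finset.sum_le_sum fun S _ => ?_
        have hS : S.card ≤ n := by simpa using card_le_univ S
        obtain ⟨d, hd⟩ := Nat.exists_eq_add_of_le hS
        have hd' : n - S.card = d := by omega
        rw [hd', ← hρ, ← pow_mul, ← pow_mul, ← pow_mul]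
        rcases le_total S.card d with h | h
        · have : σ ^ (2 * (S.card * d)) ≤ σ ^ (n * S.card) :=
            pow_le_pow_of_le_one hσ0 hσ1 (by nlinarith)
          have := pow_nonneg hσ0 (n * d)
          linarith
        · have : σ ^ (2 * (S.card * d)) ≤ σ ^ (n * d) :=
            pow_le_pow_of_le_one hσ0 hσ1 (by nlinarith)
          have := pow_nonneg hσ0 (n * S.card)
          linarith
    _ ≤ _ := by rw [sum_add_distrib]; linarith

lemma sey_lower (p : ℝ) (hp0 : 1/2 < p) (hp1 : p < 1) (m : ℕ) (D : Fin m → Fin m → Prop)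
    (hm : 0 < m) (hor : OrientedGraph D) (hns : ∀ v, ¬ SeymourVertex D v) :
    ∃ q : ℝ, 0 < q ∧ q ≤ 1 ∧ ∀ (n : ℕ) (σ : ℝ), 0 ≤ σ → σ ≤ 1 → σ ^ 4 = 4 * (p * (1 - p)) →
      1 - (2 * ((1 + σ ^ n) ^ n - 1) + (1 - q) ^ (n / m)) ≤
      gnpProb n p (fun G => ∃ D : Fin n → Fin n → Prop, Orients D G ∧ ∀ v, ¬ SeymourVertex D v) ∧
      gnpProb n p (fun G => ∃ D : Fin n → Fin n → Prop, Orients D G ∧ ∀ v, ¬ SeymourVertex D v)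
        ≤ 1 := by
  have hp : 0 < p := by linarith
  have h1p : 0 < 1 - p := by linarith
  let H : SimpleGraph (Fin m) :=
    { Adj := fun i j => D i j ∨ D j i
      symm := ⟨fun i j h => h.symm⟩
      loopless := ⟨fun i h => by rcases h with h | h <;> exact hor _ _ h h⟩ }
  set F₀ := (⊤ : SimpleGraph (Fin m)).edgeFinset with hF₀
  set R₀ := H.edgeFinset with hR₀
  have hRF₀ : R₀ ⊆ F₀ := SimpleGraph.edgeFinset_mono le_top
  refine ⟨p ^ R₀.card * (1 - p) ^ (F₀.card - R₀.card), by positivity,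
    mul_le_one₀ (pow_le_one₀ hp.le hp1.le) (by positivity) (pow_le_one₀ h1p.le (by linarith)), ?_⟩
  intro n σ hσ0 hσ1 hσ
  set q := p ^ R₀.card * (1 - p) ^ (F₀.card - R₀.card) with hq
  rw [sey_gnp]
  set E := (⊤ : SimpleGraph (Fin n)).edgeFinset with hE
  have hf : ∀ (i : Fin (n / m)) (j : Fin m), i.1 * m + j.1 < n := by
    intro i j
    have h1 : (i.1 + 1) * m ≤ n := (Nat.mul_le_mul_right m i.2).trans (Nat.div_mul_le_self n m)
    have := j.2
    nlinarith
  let f : Fin (n / m) → Fin m → Fin n := fun i j => ⟨i.1 * m + j.1, hf i j⟩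
  have hfi : ∀ i j i' j', f i j = f i' j' → i = i' ∧ j = j' := by
    intro i j i' j' h
    have h : i.1 * m + j.1 = i'.1 * m + j'.1 := congrArg Fin.val h
    have h1 : (i.1 * m + j.1) / m = i.1 := by
      rw [mul_comm, Nat.mul_add_div hm, Nat.div_eq_of_lt j.2, add_zero]
    have h2 : (i'.1 * m + j'.1) / m = i'.1 := by
      rw [mul_comm, Nat.mul_add_div hm, Nat.div_eq_of_lt j'.2, add_zero]
    have h3 : i.1 = i'.1 := by rw [← h1, ← h2, h]
    refine ⟨Fin.ext h3, Fin.ext ?_⟩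
    rw [h3] at h; omega
  have hinj : ∀ i, Function.Injective (f i) := fun i a b h => (hfi _ _ _ _ h).2
  have hinjS : ∀ i, Function.Injective (Sym2.map (f i)) := fun i => Sym2.map.injective (hinj i)
  let F : Fin (n / m) → Finset (Sym2 (Fin n)) := fun i => F₀.image (Sym2.map (f i))
  let R : Fin (n / m) → Finset (Sym2 (Fin n)) := fun i => R₀.image (Sym2.map (f i))
  have hblocks := seyEx_blocks (p := p) q univ E F R (fun i => image_subset_image hRF₀)
    (by
      intro i _ e' he'
      obtain ⟨e, he, rfl⟩ := mem_image.1 he'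
      clear he'
      induction e using Sym2.ind with
      | _ a b =>
        rw [hF₀, SimpleGraph.mem_edgeFinset, SimpleGraph.mem_edgeSet, SimpleGraph.top_adj] at he
        rw [Sym2.map_mk, hE, SimpleGraph.mem_edgeFinset, SimpleGraph.mem_edgeSet,
          SimpleGraph.top_adj]
        exact fun h => he (hinj i h))
    (by
      intro i j hij
      rw [Finset.disjoint_left]
      intro e he he'
      obtain ⟨e, _, rfl⟩ := mem_image.1 he
      obtain ⟨e', _, h⟩ := mem_image.1 he'
      induction e using Sym2.ind with
      | _ a b =>
        induction e' using Sym2.ind with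
        | _ c d =>
          rw [Sym2.map_mk, Sym2.map_mk, Sym2.eq_iff] at h
          rcases h with ⟨h, _⟩ | ⟨h, _⟩
          · exact hij (hfi _ _ _ _ h).1.symm
          · exact hij (hfi _ _ _ _ h).1.symm)
    (by
      intro i
      rw [card_image_of_injective _ (hinjS i), card_image_of_injective _ (hinjS i)])
  rw [card_univ, Fintype.card_fin] at hblocks
  have hτ0 : (0:ℝ) ≤ σ ^ 2 / 2 := by positivity
  have hτ2 : (σ ^ 2 / 2) ^ 2 = p * (1 - p) := by
    have : (σ ^ 2 / 2) ^ 2 = σ ^ 4 / 4 := by ring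
    rw [this, hσ]; ring
  set 𝒮 := (univ : Finset (Finset (Fin n))).filter (fun S => S.Nonempty ∧ S ≠ univ) with h𝒮
  have hcuts : seyEx p E (fun T => ∑ S ∈ 𝒮,
      if 2 * (T ∩ seyCut S).card ≤ (seyCut S).card then (1:ℝ) else 0)
      ≤ 2 * ((1 + σ ^ n) ^ n - 1) := by
    rw [seyEx_sum]
    refine le_trans (Finset.sum_le_sum fun S _ => ?_)
      (sey_unionbound n (σ ^ 2) σ hσ0 hσ1 rfl)
    have := seyEx_cut hp0 hp1 hτ0 hτ2 E (seyCut S) (seyCut_sub S)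
    rw [seyCut_card] at this ⊢
    rw [mul_div_cancel₀ _ (two_ne_zero)] at this
    refine le_trans (le_of_eq ?_) this
    congr!
  refine ⟨?_, ?_⟩
  · have hmono : seyEx p E (fun _ => (1:ℝ)) ≤ seyEx p E (fun T =>
        ((if ∃ D : Fin n → Fin n → Prop,
          Orients D (SimpleGraph.fromEdgeSet (T : Set (Sym2 (Fin n)))) ∧
            ∀ v, ¬ SeymourVertex D v then (1:ℝ) else 0)
        + ∑ S ∈ 𝒮, if 2 * (T ∩ seyCut S).card ≤ (seyCut S).card then (1:ℝ) else 0)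
        + (if ∀ i ∈ univ, T ∩ F i ≠ R i then (1:ℝ) else 0)) := by
      refine seyEx_mono hp.le hp1.le fun T _ => ?_
      have n1 : (0:ℝ) ≤ if ∃ D : Fin n → Fin n → Prop,
          Orients D (SimpleGraph.fromEdgeSet (T : Set (Sym2 (Fin n)))) ∧
            ∀ v, ¬ SeymourVertex D v then (1:ℝ) else 0 := by split_ifs <;> norm_num
      have n2' : ∀ S ∈ 𝒮,
          (0:ℝ) ≤ if 2 * (T ∩ seyCut S).card ≤ (seyCut S).card then (1:ℝ) else 0 := by
        intro S _; split_ifs <;> norm_num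
      have n2 := Finset.sum_nonneg n2'
      have n3 : (0:ℝ) ≤ (if ∀ i ∈ univ, T ∩ F i ≠ R i then (1:ℝ) else 0) := by
        split_ifs <;> norm_num
      by_cases c3 : ∀ i ∈ univ, T ∩ F i ≠ R i
      · rw [if_pos c3]; linarith
      by_cases c2 : ∃ S ∈ 𝒮, 2 * (T ∩ seyCut S).card ≤ (seyCut S).card
      · obtain ⟨S, hS, hc⟩ := c2
        have := Finset.single_le_sum n2' hS
        rw [if_pos hc] at this
        linarith
      push Not at c2 c3
      obtain ⟨i, _, hi⟩ := c3
      have c1 : ∃ D : Fin n → Fin n → Prop,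
          Orients D (SimpleGraph.fromEdgeSet (T : Set (Sym2 (Fin n)))) ∧
            ∀ v, ¬ SeymourVertex D v := by
        refine sey_copy (f i) (hinj i) hm D hor hns _ ?_ ?_
        · intro a b
          by_cases hab : a = b
          · subst hab
            constructor
            · intro h; exact absurd h (SimpleGraph.irrefl _)
            · intro h; rcases h with h | h <;> exact absurd h (hor _ _ h)
          have hF : s(f i a, f i b) ∈ F i := by
            refine mem_image.2 ⟨s(a, b), ?_, Sym2.map_mk _ _ _⟩
            rw [hF₀, SimpleGraph.mem_edgeFinset, SimpleGraph.mem_edgeSet, SimpleGraph.top_adj]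
            exact hab
          have hR : s(f i a, f i b) ∈ R i ↔ H.Adj a b := by
            rw [← Sym2.map_mk, (hinjS i).mem_finset_image, hR₀, SimpleGraph.mem_edgeFinset,
              SimpleGraph.mem_edgeSet]
          rw [SimpleGraph.fromEdgeSet_adj]
          have hT : s(f i a, f i b) ∈ T ↔ H.Adj a b := by
            rw [← hR, ← hi, mem_inter]
            exact ⟨fun h => ⟨h, hF⟩, fun h => h.1⟩
          rw [mem_coe, hT]
          exact ⟨fun h => h.1, fun h => ⟨h, fun e => hab (hinj i e)⟩⟩
        · intro S hS1 hS2
          have := seyCut_good S T (c2 S (mem_filter.2 ⟨mem_univ _, hS1, hS2⟩))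
          convert this
      rw [if_pos c1]; linarith
    rw [seyEx_one, seyEx_add, seyEx_add] at hmono
    have hblocks' : seyEx p E (fun T => if ∀ i ∈ univ, T ∩ F i ≠ R i then (1:ℝ) else 0)
        = (1 - q) ^ (n / m) := by
      rw [← hblocks]
      congr!
    rw [hblocks'] at hmono
    have fin : ∀ a b a' b' B c : ℝ, 1 ≤ (a + b) + c → a = a' → b = b' → b' ≤ B →
        1 - (B + c) ≤ a' := by
      intro a b a' b' B c h1 h2 h3 h4
      linarith
    refine fin _ _ _ _ _ _ hmono ?_ ?_ hcuts
    · congr!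
    · congr!
  · refine le_trans (seyEx_mono (ψ := fun _ => 1) hp.le hp1.le fun T _ => ?_)
      (seyEx_one (p := p) E).le
    split_ifs <;> norm_num

lemma sey_lim (q : ℝ) (m : ℕ) (hm : 0 < m) (σ : ℝ) (hσ0 : 0 ≤ σ) (hσ1 : σ < 1)
    (hq0 : 0 < q) (hq1 : q ≤ 1) :
    Tendsto (fun n : ℕ => 1 - (2 * ((1 + σ ^ n) ^ n - 1) + (1 - q) ^ (n / m))) atTop (nhds 1) := by
  have h1 : Tendsto (fun n : ℕ => (1 + σ ^ n) ^ n) atTop (nhds 1) := by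
    have hexp : Tendsto (fun n : ℕ => Real.exp ((n:ℝ) * σ ^ n)) atTop (nhds 1) := by
      have := (Real.continuous_exp.tendsto 0).comp
        (tendsto_self_mul_const_pow_of_lt_one hσ0 hσ1)
      rwa [Real.exp_zero] at this
    refine tendsto_of_tendsto_of_tendsto_of_le_of_le tendsto_const_nhds hexp ?_ ?_
    · intro n
      exact one_le_pow₀ (by have := pow_nonneg hσ0 n; linarith)
    · intro n
      have hx := pow_nonneg hσ0 n
      have := Real.add_one_le_exp (σ ^ n)
      calc (1 + σ ^ n) ^ n ≤ (Real.exp (σ ^ n)) ^ n :=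
            pow_le_pow_left₀ (by linarith) (by linarith) n
        _ = _ := by rw [← Real.exp_nat_mul]
  have h2 : Tendsto (fun n : ℕ => (1 - q) ^ (n / m)) atTop (nhds 0) :=
    (tendsto_pow_atTop_nhds_zero_of_lt_one (by linarith) (by linarith)).comp
      (Nat.tendsto_div_const_atTop hm.ne')
  have h3 := tendsto_const_nhds (x := (1:ℝ)) (f := (atTop : Filter ℕ)) |>.sub
    (((h1.sub_const 1).const_mul 2).add h2)
  simpa using h3

end SeyMain

/-- for fixed `p ∈ (1/2, 1)`, if some (nonempty) oriented graph has no
Seymour vertex, then a.a.s. `G(n,p)` admits an orientation with no Seymour vertex. -/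
theorem stmt_1 (p : ℝ) (hp0 : 1/2 < p) (hp1 : p < 1)
    (hcounter : ∃ (m : ℕ) (D : Fin m → Fin m → Prop),
      0 < m ∧ OrientedGraph D ∧ ∀ v, ¬ SeymourVertex D v) :
    Tendsto (fun n => gnpProb n p (fun G =>
        ∃ D : Fin n → Fin n → Prop, Orients D G ∧ ∀ v, ¬ SeymourVertex D v))
      atTop (nhds 1) := by
  obtain ⟨m, D, hm, hor, hns⟩ := hcounter
  obtain ⟨q, hq0, hq1, h⟩ := sey_lower p hp0 hp1 m D hm hor hns
  have hρ0 : 0 ≤ 4 * (p * (1 - p)) := by nlinarith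
  have hρ1 : 4 * (p * (1 - p)) < 1 := by nlinarith [sq_pos_of_pos (show 0 < p - 1/2 by linarith)]
  have hσ4 : (√(√(4 * (p * (1 - p))))) ^ 4 = 4 * (p * (1 - p)) := by
    rw [show 4 = 2 * 2 from rfl, pow_mul, Real.sq_sqrt (Real.sqrt_nonneg _), Real.sq_sqrt hρ0]
  have hσ0 := Real.sqrt_nonneg (√(4 * (p * (1 - p))))
  have hσ1 : √(√(4 * (p * (1 - p)))) < 1 := by
    by_contra hc
    push Not at hc
    have := one_le_pow₀ hc (n := 4)
    linarith
  exact tendsto_of_tendsto_of_tendsto_of_le_of_le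
    (sey_lim q m hm _ hσ0 hσ1 hq0 hq1) tendsto_const_nhds
    (fun n => (h n _ hσ0 hσ1.le hσ4).1) (fun n => (h n _ hσ0 hσ1.le hσ4).2)
end

section
/- Let D be an oriented graph on n vertices that contains no Seymour vertex, and suppose that every oriented graph on fewer than n vertices contains a Seymour vertex (i.e., D is a vertex-minimal counterexample to Seymour's conjecture). Then the minimum outdegree of D satisfies δ⁺(D) > √n. -/
open Filter

open Classical in
/-- the out-boundary of a set -/
noncomputable def bdry3 {n : ℕ} (D : Fin n → Fin n → Prop) (S : Finset (Fin n)) : Finset (Fin n) :=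
  Finset.univ.filter fun w => w ∉ S ∧ ∃ u ∈ S, D u w

open Classical in
theorem ncard1 {n : ℕ} (D : Fin n → Fin n → Prop) (hD : OrientedGraph D) (v : Fin n) :
    (outNbr D v).ncard = (Finset.univ.filter fun w => D v w).card := by
  rw [← Set.ncard_coe_finset]
  congr 1
  ext w
  simp only [outNbr, Set.mem_setOf_eq, Finset.coe_filter, Finset.mem_univ, true_and]
  constructor
  · exact fun h => h.2
  · intro h
    refine ⟨?_, h⟩
    rintro rfl
    exact hD _ _ h h

open Classical in
theorem ncard2 {n : ℕ} (D : Fin n → Fin n → Prop) (hD : OrientedGraph D) (v : Fin n) :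
    (outNbr2 D v).ncard =
      (Finset.univ.filter fun w => ¬ D v w ∧ ∃ u, D v u ∧ D u w).card := by
  rw [← Set.ncard_coe_finset]
  congr 1
  ext w
  simp only [outNbr2, outNbr, Set.mem_setOf_eq, Finset.coe_filter, Finset.mem_univ, true_and,
    Set.mem_insert_iff]
  constructor
  · rintro ⟨h, u, hu, huw⟩
    push Not at h
    exact ⟨h.2 h.1, u, hu.2, huw⟩
  · rintro ⟨h, u, hu, huw⟩
    refine ⟨?_, u, ⟨?_, hu⟩, huw⟩
    · rintro (rfl | h')
      · exact hD _ _ hu huw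
      · exact h h'.2
    · rintro rfl
      exact h huw

open Classical in
theorem transfer3 (n : ℕ) (D : Fin n → Fin n → Prop) (hD : OrientedGraph D)
    (hmin : ∀ m : ℕ, 0 < m → m < n → ∀ D' : Fin m → Fin m → Prop,
      OrientedGraph D' → ∃ v, SeymourVertex D' v) (S : Finset (Fin n)) (hS : S.Nonempty)
    (hS' : S ≠ Finset.univ) :
    ∃ u ∈ S, (S.filter fun w => D u w).card ≤
      (S.filter fun w => ¬ D u w ∧ ∃ x ∈ S, D u x ∧ D x w).card := by
  have hlt : S.card < n := by
    have := Finset.card_lt_univ_of_notMem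
      (s := S) (x := (Classical.choose (not_forall.mp fun h => hS' (Finset.eq_univ_iff_forall.mpr h))))
      (Classical.choose_spec (not_forall.mp fun h => hS' (Finset.eq_univ_iff_forall.mpr h)))
    simpa using this
  let e := S.equivFin.symm
  have hD' : OrientedGraph fun i j => D (e i) (e j) := fun i j h => hD _ _ h
  obtain ⟨v, hv⟩ := hmin S.card hS.card_pos hlt (fun i j => D (e i) (e j)) hD'
  unfold SeymourVertex at hv
  rw [ncard1 _ hD', ncard2 _ hD'] at hv
  let f : Fin S.card ↪ Fin n := e.toEmbedding.trans (Function.Embedding.subtype _)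
  have hf : ∀ i, f i = e i := fun i => rfl
  have hfs : ∀ x ∈ S, ∃ i, f i = x := fun x hx => ⟨e.symm ⟨x, hx⟩, by simp [hf]⟩
  have hfm : ∀ i, f i ∈ S := fun i => (e i).2
  simp only [← hf] at hv
  refine ⟨f v, hfm v, ?_⟩
  rw [← Finset.card_map f, ← Finset.card_map f] at hv
  convert hv using 2
  · ext w
    simp only [Finset.mem_filter, Finset.mem_map, Finset.mem_univ, true_and]
    constructor
    · rintro ⟨hw, h⟩
      obtain ⟨i, rfl⟩ := hfs w hw
      exact ⟨i, h, rfl⟩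
    · rintro ⟨i, h, rfl⟩
      exact ⟨hfm i, h⟩
  · ext w
    simp only [Finset.mem_filter, Finset.mem_map, Finset.mem_univ, true_and]
    constructor
    · rintro ⟨hw, h, x, hx, h1, h2⟩
      obtain ⟨i, rfl⟩ := hfs w hw
      obtain ⟨j, rfl⟩ := hfs x hx
      exact ⟨i, ⟨h, j, h1, h2⟩, rfl⟩
    · rintro ⟨i, ⟨h, j, h1, h2⟩, rfl⟩
      exact ⟨hfm i, h, f j, hfm j, h1, h2⟩

open Classical in
theorem step3 (n : ℕ) (D : Fin n → Fin n → Prop) (hD : OrientedGraph D)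
    (hno : ∀ v, ¬ SeymourVertex D v)
    (hmin : ∀ m : ℕ, 0 < m → m < n → ∀ D' : Fin m → Fin m → Prop,
      OrientedGraph D' → ∃ v, SeymourVertex D' v) (S : Finset (Fin n)) (hS : S.Nonempty)
    (hS' : S ≠ Finset.univ) :
    ∃ P ⊆ bdry3 D S, (bdry3 D (S ∪ P)).card < (bdry3 D S).card := by
  obtain ⟨u, hu, h⟩ := transfer3 n D hD hmin S hS hS'
  have h1 := hno u
  unfold SeymourVertex at h1
  rw [ncard1 _ hD, ncard2 _ hD, not_le] at h1
  set A := Finset.univ.filter fun w => D u w with hA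
  set B := Finset.univ.filter fun w => ¬ D u w ∧ ∃ x, D u x ∧ D x w with hB
  have hP : A \ S ⊆ bdry3 D S := by
    intro w hw
    simp only [hA, Finset.mem_sdiff, Finset.mem_filter, Finset.mem_univ, true_and] at hw
    simp only [bdry3, Finset.mem_filter, Finset.mem_univ, true_and]
    exact ⟨hw.2, u, hu, hw.1⟩
  refine ⟨A \ S, hP, ?_⟩
  have c1 := Finset.card_sdiff_add_card_inter A S
  have c2 := Finset.card_sdiff_add_card_inter B S
  have c3 : (S.filter fun w => D u w).card ≤ (A ∩ S).card := by
    apply Finset.card_le_card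
    intro w; simp [hA]; tauto
  have c3' : (A ∩ S).card ≤ (S.filter fun w => D u w).card := by
    apply Finset.card_le_card
    intro w; simp [hA]; tauto
  have c4 : (S.filter fun w => ¬ D u w ∧ ∃ x ∈ S, D u x ∧ D x w).card ≤ (B ∩ S).card := by
    apply Finset.card_le_card
    intro w
    simp only [hB, Finset.mem_inter, Finset.mem_filter, Finset.mem_univ, true_and]
    rintro ⟨hw, h, x, hx, h1, h2⟩
    exact ⟨⟨h, x, h1, h2⟩, hw⟩
  have c5 : bdry3 D (S ∪ (A \ S)) ⊆ (bdry3 D S \ (A \ S)) ∪ (B \ S) := by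
    intro w
    simp only [bdry3, hA, hB, Finset.mem_union, Finset.mem_sdiff, Finset.mem_filter,
      Finset.mem_univ, true_and]
    rintro ⟨hw, x, hx, hxw⟩
    push Not at hw
    rcases hx with hx | hx
    · left
      exact ⟨⟨hw.1, x, hx, hxw⟩, fun hc => hc.2 (hw.2 hc.1)⟩
    · right
      exact ⟨⟨fun hc => hw.1 (hw.2 hc), x, hx.1, hxw⟩, hw.1⟩
  have c6 := (Finset.card_le_card c5).trans (Finset.card_union_le _ _)
  have c7 := Finset.card_sdiff_add_card_eq_card hP
  omega

theorem bound3 (n : ℕ) (D : Fin n → Fin n → Prop) (hD : OrientedGraph D)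
    (hno : ∀ v, ¬ SeymourVertex D v)
    (hmin : ∀ m : ℕ, 0 < m → m < n → ∀ D' : Fin m → Fin m → Prop,
      OrientedGraph D' → ∃ v, SeymourVertex D' v) (b : ℕ) :
    ∀ S : Finset (Fin n), S.Nonempty → (bdry3 D S).card ≤ b →
      2 * n ≤ 2 * S.card + b * (b + 1) := by
  classical
  induction b with
  | zero =>
    intro S hS hb
    by_cases hS' : S = Finset.univ
    · simp [hS']
    · obtain ⟨P, -, h⟩ := step3 n D hD hno hmin S hS hS'
      omega
  | succ b ih =>
    intro S hS hb
    by_cases hS' : S = Finset.univ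
    · simp [hS']
    · obtain ⟨P, hP, h⟩ := step3 n D hD hno hmin S hS hS'
      have := ih (S ∪ P) (hS.mono Finset.subset_union_left) (by omega)
      have h2 := Finset.card_union_le S P
      have h3 := Finset.card_le_card hP
      nlinarith

open Classical in
theorem deg3 (n : ℕ) (D : Fin n → Fin n → Prop) (hD : OrientedGraph D) (hn : 0 < n) (d : ℕ)
    (hd : ∀ v, d ≤ (Finset.univ.filter fun w => D v w).card) : 2 * d + 1 ≤ n := by
  have h := Finset.sum_card_bipartiteAbove_eq_sum_card_bipartiteBelow (s := Finset.univ)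
    (t := Finset.univ) D
  unfold Finset.bipartiteAbove Finset.bipartiteBelow at h
  have h1 : ∑ v : Fin n, d ≤ ∑ v : Fin n, (Finset.univ.filter fun w => D v w).card :=
    Finset.sum_le_sum fun v _ => hd v
  have h2 : ∑ v : Fin n, ((Finset.univ.filter fun w => D v w).card +
      (Finset.univ.filter fun w => D w v).card + 1) ≤ ∑ v : Fin n, n := by
    refine Finset.sum_le_sum fun v _ => ?_
    rw [← Finset.card_union_of_disjoint]
    · have := Finset.card_lt_univ_of_notMem (x := v) (s := (Finset.univ.filter fun w => D v w) ∪
        (Finset.univ.filter fun w => D w v)) (by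
          simp only [Finset.mem_union, Finset.mem_filter, Finset.mem_univ, true_and, or_self]
          exact fun h => hD _ _ h h)
      simpa using this
    · rw [Finset.disjoint_left]
      intro w
      simp only [Finset.mem_filter, Finset.mem_univ, true_and]
      exact hD v w
  rw [Finset.sum_add_distrib, Finset.sum_add_distrib] at h2
  simp only [Finset.sum_const, Finset.card_univ, Fintype.card_fin, smul_eq_mul] at h1 h2
  have : n * (2 * d + 1) ≤ n * n := by nlinarith
  exact Nat.le_of_mul_le_mul_left this hn

/-- a vertex-minimal counterexample to Seymour's conjecture has minimum
outdegree greater than `√n`. -/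
theorem stmt_3 (n : ℕ) (D : Fin n → Fin n → Prop) (hD : OrientedGraph D)
    (hno : ∀ v, ¬ SeymourVertex D v)
    (hmin : ∀ m : ℕ, 0 < m → m < n → ∀ D' : Fin m → Fin m → Prop,
      OrientedGraph D' → ∃ v, SeymourVertex D' v) :
    ∀ v, Real.sqrt n < ((outNbr D v).ncard : ℝ) := by
  classical
  intro v
  have hn : 0 < n := v.pos
  obtain ⟨u, -, hu⟩ := Finset.exists_min_image Finset.univ (fun w => (outNbr D w).ncard)
    ⟨v, Finset.mem_univ v⟩
  have hdeg := deg3 n D hD hn (outNbr D u).ncard fun w => by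
    rw [← ncard1 D hD]; exact hu w (Finset.mem_univ w)
  have hb := bound3 n D hD hno hmin (outNbr D u).ncard {u} (Finset.singleton_nonempty u) (by
    rw [ncard1 D hD]
    apply Finset.card_le_card
    intro w
    simp only [bdry3, Finset.mem_filter, Finset.mem_univ, true_and, Finset.mem_singleton]
    rintro ⟨-, x, rfl, h⟩
    exact h)
  have hpos : 0 < (outNbr D u).ncard := by
    have := hno u
    unfold SeymourVertex at this
    omega
  have huv := hu v (Finset.mem_univ v)
  rw [Finset.card_singleton] at hb
  generalize (outNbr D u).ncard = d at *
  have h3 : 3 ≤ d := by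
    by_contra hc
    interval_cases d <;> omega
  have hlt : n < d * d := by nlinarith
  rw [Real.sqrt_lt' (by exact_mod_cast hpos.trans_le huv)]
  have : n < (outNbr D v).ncard ^ 2 := by
    nlinarith
  exact_mod_cast this
end
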